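/- The smoothed function f_μ(x) := μ ln Σ_j exp(λ_j(x)/μ) is convex on E, and its gradient satisfies ‖∇f_μ(x) − ∇f_μ(y)‖*_∞ ≤ (1/μ)‖x − y‖_∞ for all x, y ∈ E, where ‖g‖*_∞ := sup{⟨g, v⟩ : ‖v‖_∞ ≤ 1}. -/

import Mathlib

open RealInnerProductSpace
open Filter Topology Asymptotics Bornology

/-!
The `n` complex eigenvalues `λ_j(z)` make sense at every point `z` of the complexification, and on a
complex line symmetric expressions such as `∏ φ(λ_j)` and `∑ φ(λ_j)`, with `φ` entire, are again
entire functions. This allows complex analysis to replace the Helton–Vinnikov theorem.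

Let `G(z) = ∑ exp (Re λ_j(z))`, and let `x`, `y`, `w` be real points. At purely imaginary points the
`λ_j` are purely imaginary, so Phragmén–Lindelöf in the right half plane for
`ζ ↦ ∏ (2 + exp (m λ_j(iy + ζx)))`, with `m → ∞`, gives
`∑ max (Re λ_j(x + iy)) 0 ≤ ∑ max (λ_j(x)) 0`. As `x` may be shifted along `e`, this says that
`Re λ(x + iy)` is weakly majorized by `λ(x)`, whence `G(x + iy) ≤ G(x)`. Two consequences follow.

* The three lines theorem along `ζ ↦ x + ζw` shows that `log G` is convex.
* The function `ζ ↦ ∑ exp (λ_j(x + ζw)) + ∑ exp (λ_j(x - ζw))` is real and at most `2 G(x)` in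
  absolute value on the imaginary axis, and grows along the positive real axis at exponential rate
  at most `σ = max_j |λ_j(w)|`. Composing it with Chebyshev polynomials of increasing degree gives
  `G(x + w) + G(x - w) ≤ 2 cosh σ · G(x) ≤ 2 exp (σ² / 2) G(x)`, so by the arithmetic-geometric mean
  inequality the second difference of `log G` at `x` in direction `w` is at most `σ²`.

A convex function whose second differences are at most `L N(w)²`, for a seminorm `N`, has a gradient
that is `L`-Lipschitz from `N` to its dual.
-/

section Permutations

variable {α ι : Type*} [Fintype ι]

theorem exists_perm_of_map_univ_eq {v w : ι → α}
    (h : (Finset.univ : Finset ι).val.map v = (Finset.univ : Finset ι).val.map w) :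
    ∃ σ : Equiv.Perm ι, w ∘ σ = v := by
  classical
  have hcard : ∀ a, Fintype.card {i // v i = a} = Fintype.card {i // w i = a} := fun a => by
    have := congrArg (Multiset.count a) h
    simpa only [Multiset.count_map, ← Finset.filter_val, Finset.card_val, Fintype.card_subtype,
      eq_comm] using this
  exact ⟨Equiv.ofFiberEquiv fun a => Fintype.equivOfCardEq (hcard a),
    funext (Equiv.ofFiberEquiv_map _)⟩

theorem exists_perm_of_prod_sub_eq {R : Type*} [CommRing R] [IsDomain R] [Infinite R]
    {v w : ι → R} (h : ∀ t, ∏ i, (t - v i) = ∏ i, (t - w i)) :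
    ∃ σ : Equiv.Perm ι, w ∘ σ = v := by
  refine exists_perm_of_map_univ_eq ?_
  have hpoly : ∏ i, (Polynomial.X - Polynomial.C (v i))
      = ∏ i, (Polynomial.X - Polynomial.C (w i)) :=
    Polynomial.funext fun t => by simpa [Polynomial.eval_prod] using h t
  have hroots (u : ι → R) :
      (∏ i, (Polynomial.X - Polynomial.C (u i))).roots = Finset.univ.val.map u := by
    rw [← Polynomial.roots_multiset_prod_X_sub_C (Finset.univ.val.map u), Multiset.map_map]
    rfl
  rw [← hroots, hpoly, hroots]

theorem norm_comp_perm [SeminormedAddCommGroup α] (v : ι → α) (σ : Equiv.Perm ι) :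
    ‖v ∘ σ‖ = ‖v‖ := by
  have hle : ∀ (u : ι → α) (τ : Equiv.Perm ι), ‖u ∘ τ‖ ≤ ‖u‖ := fun u τ =>
    (pi_norm_le_iff_of_nonneg (norm_nonneg u)).2 fun i => norm_le_pi_norm u (τ i)
  exact (hle v σ).antisymm (by simpa [Function.comp_assoc] using hle (v ∘ σ) σ.symm)

end Permutations

/-! ### Eigenvalues with respect to a form -/

variable {E : Type*} [NormedAddCommGroup E] [NormedSpace ℂ E]

/-- `v` lists, with multiplicity, the roots of `t ↦ p (z - t • e)`: the eigenvalues of `z` with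
respect to `p` in direction `e`. -/
def IsEigenvalueVector (p : E → ℂ) (e : E) {n : ℕ} (z : E) (v : Fin n → ℂ) : Prop :=
  ∀ t : ℂ, p (z - t • e) = p e * ∏ j, (v j - t)

/-- A homogeneous form of degree `n` over `ℂ`, given by its values, with `n` eigenvalues in
direction `e` at every point. -/
structure IsSplitForm (p : E → ℂ) (e : E) (n : ℕ) : Prop where
  map_smul : ∀ (a : ℂ) (z : E), p (a • z) = a ^ n * p z
  differentiable : Differentiable ℂ p
  ne_zero : p e ≠ 0
  exists_eigenvalues : ∀ z, ∃ v : Fin n → ℂ, IsEigenvalueVector p e z v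

namespace IsEigenvalueVector

variable {p : E → ℂ} {e z : E} {n : ℕ} {v w : Fin n → ℂ}

theorem eq_zero (hv : IsEigenvalueVector p e z v) (j : Fin n) : p (z - v j • e) = 0 := by
  rw [hv, Finset.prod_eq_zero (Finset.mem_univ j) (sub_self _), mul_zero]

theorem sub_smul (hv : IsEigenvalueVector p e z v) (s : ℂ) :
    IsEigenvalueVector p e (z - s • e) (fun j => v j - s) := fun t => by
  rw [sub_sub, ← add_smul, hv]
  simp only [sub_sub]

theorem smul (h : IsSplitForm p e n) (hv : IsEigenvalueVector p e z v) (a : ℂ) :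
    IsEigenvalueVector p e (a • z) (a • v) := fun t => by
  rcases eq_or_ne a 0 with rfl | ha
  · have : (0 : ℂ) • z - t • e = (-t) • e := by simp
    rw [this, h.map_smul]
    simp [mul_comm]
  · have hz : a • z - t • e = a • (z - (t / a) • e) := by
      rw [smul_sub, smul_smul, mul_div_cancel₀ _ ha]
    have hfactor (j : Fin n) : (a • v) j - t = a * (v j - t / a) := by
      rw [mul_sub, mul_div_cancel₀ _ ha, Pi.smul_apply, smul_eq_mul]
    simp only [hz, h.map_smul, hv _, hfactor, Finset.prod_mul_distrib, Finset.prod_const,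
      Finset.card_univ, Fintype.card_fin]
    ring

theorem exists_perm (hp : p e ≠ 0) (hv : IsEigenvalueVector p e z v)
    (hw : IsEigenvalueVector p e z w) : ∃ σ : Equiv.Perm (Fin n), w ∘ σ = v := by
  refine exists_perm_of_prod_sub_eq fun t => ?_
  have hprod := mul_left_cancel₀ hp ((hv t).symm.trans (hw t))
  simp only [← neg_sub t, Finset.prod_neg] at hprod
  exact mul_left_cancel₀ (pow_ne_zero _ (neg_ne_zero.2 one_ne_zero)) hprod

end IsEigenvalueVector

namespace IsSplitForm

variable {p : E → ℂ} {e : E} {n : ℕ} (h : IsSplitForm p e n)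

/-- The eigenvalues of `z`, in an arbitrarily chosen order: only symmetric functions of them are
meaningful. -/
noncomputable def eigenvalues (z : E) : Fin n → ℂ :=
  (h.exists_eigenvalues z).choose

theorem isEigenvalueVector_eigenvalues (z : E) : IsEigenvalueVector p e z (h.eigenvalues z) :=
  (h.exists_eigenvalues z).choose_spec

theorem apply_eigenvalues_eq {X : Type*} {F : (Fin n → ℂ) → X}
    (hF : ∀ v (σ : Equiv.Perm (Fin n)), F (v ∘ σ) = F v) {z : E} {v : Fin n → ℂ}
    (hv : IsEigenvalueVector p e z v) : F (h.eigenvalues z) = F v := by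
  obtain ⟨σ, hσ⟩ := (h.isEigenvalueVector_eigenvalues z).exists_perm h.ne_zero hv
  rw [← hσ, hF]

theorem sum_eigenvalues_eq {M : Type*} [AddCommMonoid M] (φ : ℂ → M) {z : E} {v : Fin n → ℂ}
    (hv : IsEigenvalueVector p e z v) : ∑ j, φ (h.eigenvalues z j) = ∑ j, φ (v j) :=
  h.apply_eigenvalues_eq (F := fun w => ∑ j, φ (w j))
    (fun w σ => Equiv.sum_comp σ fun j => φ (w j)) hv

theorem norm_eigenvalues_smul (a : ℂ) (z : E) :
    ‖h.eigenvalues (a • z)‖ = ‖a‖ * ‖h.eigenvalues z‖ := by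
  rw [h.apply_eigenvalues_eq norm_comp_perm ((h.isEigenvalueVector_eigenvalues z).smul h a),
    norm_smul]

theorem exists_norm_eigenvalues_le : ∃ B : ℝ, 0 ≤ B ∧ ∀ z, ‖h.eigenvalues z‖ ≤ B * ‖z‖ := by
  have hne : p (0 - e) ≠ 0 := by
    rw [zero_sub, ← neg_one_smul ℂ e, h.map_smul]
    exact mul_ne_zero (pow_ne_zero _ (neg_ne_zero.2 one_ne_zero)) h.ne_zero
  have hcont : Continuous fun z => p (z - e) := h.differentiable.continuous.comp (by fun_prop)
  obtain ⟨δ, hδ, hball⟩ := Metric.eventually_nhds_iff.1 (hcont.continuousAt.eventually_ne hne)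
  refine ⟨δ⁻¹, by positivity, fun z => (pi_norm_le_iff_of_nonneg (by positivity)).2 fun j => ?_⟩
  set c := h.eigenvalues z j
  by_contra! hlt
  have hc : 0 < ‖c‖ := (by positivity : 0 ≤ δ⁻¹ * ‖z‖).trans_lt hlt
  refine hball (y := c⁻¹ • z) ?_ ?_
  · rw [dist_zero_right, norm_smul, norm_inv, inv_mul_lt_iff₀ hc]
    rwa [inv_mul_lt_iff₀ hδ, mul_comm] at hlt
  · have hz : c⁻¹ • z - e = c⁻¹ • (z - c • e) := by
      rw [smul_sub, inv_smul_smul₀ (norm_pos_iff.1 hc)]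
    rw [hz, h.map_smul, (h.isEigenvalueVector_eigenvalues z).eq_zero, mul_zero]

theorem continuous_comp_eigenvalues {X : Type*} [TopologicalSpace X] {F : (Fin n → ℂ) → X}
    (hF : Continuous F) (hsymm : ∀ v (σ : Equiv.Perm (Fin n)), F (v ∘ σ) = F v) :
    Continuous fun z => F (h.eigenvalues z) := by
  rw [continuous_iff_seqContinuous]
  intro u z hu
  refine tendsto_of_subseq_tendsto fun ns hns => ?_
  replace hns : Tendsto (u ∘ ns) atTop (𝓝 z) := hu.comp hns
  obtain ⟨B, hB₀, hB⟩ := h.exists_norm_eigenvalues_le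
  obtain ⟨R, hR⟩ := hns.norm.bddAbove_range
  have hmem (k : ℕ) : h.eigenvalues (u (ns k)) ∈ Metric.closedBall 0 (B * R) :=
    mem_closedBall_zero_iff.2 ((hB _).trans (by gcongr; exact hR ⟨k, rfl⟩))
  obtain ⟨v, -, θ, hθ, hlim⟩ := (isCompact_closedBall _ _).tendsto_subseq hmem
  have hv : IsEigenvalueVector p e z v := fun t => by
    have hleft : Continuous fun z => p (z - t • e) := h.differentiable.continuous.comp (by fun_prop)
    have hright : Continuous fun w : Fin n → ℂ => p e * ∏ j, (w j - t) := by fun_prop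
    refine tendsto_nhds_unique ((hleft.tendsto z).comp (hns.comp hθ.tendsto_atTop))
      (((hright.tendsto v).comp hlim).congr fun k => ?_)
    exact (h.isEigenvalueVector_eigenvalues _ t).symm
  refine ⟨θ, ?_⟩
  change Tendsto _ _ (𝓝 (F (h.eigenvalues z)))
  rw [h.apply_eigenvalues_eq hsymm hv]
  exact (hF.tendsto v).comp hlim

end IsSplitForm

/-! ### Entire functions of the eigenvalues -/

section EntireFunctions

theorem exists_polynomial_tendstoLocallyUniformly {φ : ℂ → ℂ} (hφ : Differentiable ℂ φ) :
    ∃ q : ℕ → Polynomial ℂ, TendstoLocallyUniformly (fun N z => (q N).eval z) φ atTop := by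
  have hseries := (hφ.hasFPowerSeriesOnBall 0 zero_lt_one).tendstoLocallyUniformlyOn'
  rw [Metric.eball_top, tendstoLocallyUniformlyOn_univ] at hseries
  refine ⟨fun N => ∑ k ∈ Finset.range N,
    Polynomial.monomial k ((cauchyPowerSeries φ 0 (1 : NNReal) k) fun _ => 1), ?_⟩
  refine hseries.congr fun N z => ?_
  simp [FormalMultilinearSeries.partialSum, Polynomial.eval_finsetSum, mul_comm]

theorem tendstoLocallyUniformly_prod_comp {α β : Type*} [TopologicalSpace α] {ι : Type*}
    {l : Filter ι} {F : ι → α → ℂ} {f : α → ℂ} (hF : TendstoLocallyUniformly F f l)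
    (hf : Continuous f) (s : Finset β) :
    TendstoLocallyUniformly (fun N (v : β → α) => ∏ j ∈ s, F N (v j))
      (fun v => ∏ j ∈ s, f (v j)) l := by
  classical
  induction s using Finset.induction_on with
  | empty =>
    exact (tendsto_const_nhds (x := (1 : ℂ))).tendstoUniformly_const.tendstoLocallyUniformly
  | insert j s hj ih =>
    simp only [Finset.prod_insert hj]
    exact (hF.comp (fun v : β → α => v j) (continuous_apply j)).fun_mul₀ ih (by fun_prop)
      (by fun_prop)

theorem sum_eq_sum_range_prod_one_add_natCast_mul {K ι : Type*} [Field K] [CharZero K] [Fintype ι]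
    (w : ι → K) :
    ∑ j, w j = ∑ i ∈ Finset.range (Fintype.card ι + 1), (∏ j, (1 + (i : K) * w j)) *
      (Lagrange.basis (Finset.range (Fintype.card ι + 1)) (fun i : ℕ => (i : K)) i).coeff 1 := by
  classical
  set D : Polynomial K := ∏ j, (1 + Polynomial.C (w j) * Polynomial.X) with hD
  have hdeg : D.degree < (Finset.range (Fintype.card ι + 1)).card := by
    refine ((Polynomial.degree_prod_le _ _).trans
      (Finset.sum_le_card_nsmul _ _ 1 fun j _ => ?_)).trans_lt ?_
    · compute_degree
    · rw [Finset.card_univ, Finset.card_range, nsmul_one]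
      exact_mod_cast Nat.lt_succ_self _
  have hcoeff : D.coeff 1 = ∑ j, w j := by
    have hderiv : D.coeff 1 = D.derivative.eval 0 := by
      rw [← Polynomial.coeff_zero_eq_eval_zero, Polynomial.coeff_derivative]; simp
    rw [hderiv, hD, Polynomial.derivative_prod_finset, Polynomial.eval_finsetSum]
    simp [Polynomial.eval_prod]
  have heval (i : ℕ) : D.eval (i : K) = ∏ j, (1 + (i : K) * w j) := by
    simp only [hD, Polynomial.eval_prod, Polynomial.eval_add, Polynomial.eval_one,
      Polynomial.eval_mul, Polynomial.eval_C, Polynomial.eval_X, mul_comm (w _)]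
  conv_lhs => rw [← hcoeff, Lagrange.eq_interpolate (s := Finset.range (Fintype.card ι + 1))
    (v := fun i : ℕ => (i : K)) Nat.cast_injective.injOn hdeg]
  simp only [Lagrange.interpolate_apply, Polynomial.finsetSum_coeff, Polynomial.coeff_C_mul, heval]

end EntireFunctions

namespace IsSplitForm

variable {p : E → ℂ} {e : E} {n : ℕ} (h : IsSplitForm p e n) {γ : ℂ → E}

theorem differentiable_prod_eval_eigenvalues (hγ : Differentiable ℂ γ) (q : Polynomial ℂ) :
    Differentiable ℂ fun ζ => ∏ j, q.eval (h.eigenvalues (γ ζ) j) := by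
  have hlinear (β : ℂ) : Differentiable ℂ fun ζ => ∏ j, (h.eigenvalues (γ ζ) j - β) := by
    have hprod (ζ : ℂ) : ∏ j, (h.eigenvalues (γ ζ) j - β) = (p e)⁻¹ * p (γ ζ - β • e) := by
      rw [h.isEigenvalueVector_eigenvalues (γ ζ) β, inv_mul_cancel_left₀ h.ne_zero]
    simp only [hprod]
    exact (h.differentiable.comp (hγ.sub_const _)).const_mul _
  have hroots (t : ℂ) : q.eval t = q.leadingCoeff * (q.roots.map (t - ·)).prod := by
    conv_lhs => rw [(IsAlgClosed.splits q).eq_prod_roots]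
    simp [Polynomial.eval_multiset_prod, Multiset.map_map]
  simp only [hroots, Finset.prod_mul_distrib]
  refine Differentiable.const_mul ?_ _
  induction q.roots using Multiset.induction with
  | empty => simp
  | cons β s ih =>
    simpa only [Multiset.map_cons, Multiset.prod_cons, Finset.prod_mul_distrib]
      using (hlinear β).fun_mul ih

theorem differentiable_prod_eigenvalues (hγ : Differentiable ℂ γ) {φ : ℂ → ℂ}
    (hφ : Differentiable ℂ φ) : Differentiable ℂ fun ζ => ∏ j, φ (h.eigenvalues (γ ζ) j) := by
  obtain ⟨q, hq⟩ := exists_polynomial_tendstoLocallyUniformly hφ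
  obtain ⟨B, hB₀, hB⟩ := h.exists_norm_eigenvalues_le
  have hprod := tendstoLocallyUniformly_prod_comp hq hφ.continuous (Finset.univ : Finset (Fin n))
  have hlim : TendstoLocallyUniformly (fun N ζ => ∏ j, (q N).eval (h.eigenvalues (γ ζ) j))
      (fun ζ => ∏ j, φ (h.eigenvalues (γ ζ) j)) atTop := by
    rw [tendstoLocallyUniformly_iff_forall_isCompact] at hprod ⊢
    intro S hS
    obtain ⟨R, hR⟩ := hS.exists_bound_of_continuousOn hγ.continuous.continuousOn
    refine ((hprod _ (isCompact_closedBall 0 (B * R))).comp fun ζ => h.eigenvalues (γ ζ)).mono ?_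
    exact fun ζ hζ => mem_closedBall_zero_iff.2 ((hB _).trans (by gcongr; exact hR ζ hζ))
  exact differentiableOn_univ.1 ((tendstoLocallyUniformlyOn_univ.2 hlim).differentiableOn
    (Eventually.of_forall fun N =>
      (h.differentiable_prod_eval_eigenvalues hγ (q N)).differentiableOn) isOpen_univ)

theorem differentiable_sum_eigenvalues (hγ : Differentiable ℂ γ) {φ : ℂ → ℂ}
    (hφ : Differentiable ℂ φ) : Differentiable ℂ fun ζ => ∑ j, φ (h.eigenvalues (γ ζ) j) := by
  simp only [sum_eq_sum_range_prod_one_add_natCast_mul fun j => φ (h.eigenvalues _ j)]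
  exact Differentiable.fun_sum fun i _ => (h.differentiable_prod_eigenvalues hγ
    ((hφ.const_mul (i : ℂ)).const_add 1)).mul_const _

end IsSplitForm

/-! ### Convex functions with bounded second differences -/

section ConvexSmooth

theorem exists_subgradient_of_convexOn {V : Type*} [AddCommGroup V] [Module ℝ V]
    [TopologicalSpace V] [IsTopologicalAddGroup V] [ContinuousSMul ℝ V] {f : V → ℝ}
    (hf : ConvexOn ℝ Set.univ f) (hcont : Continuous f) (x : V) :
    ∃ φ : StrongDual ℝ V, ∀ w, f x + φ w ≤ f (x + w) := by
  have hopen : IsOpen {q : V × ℝ | q.1 ∈ Set.univ ∧ f q.1 < q.2} := by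
    simp only [Set.mem_univ, true_and]
    exact isOpen_lt (by fun_prop) continuous_snd
  obtain ⟨ψ, hψ⟩ := geometric_hahn_banach_open_point hf.convex_strict_epigraph hopen
    (x := (x, f x)) (by simp)
  have hsplit (w : V) (s : ℝ) : ψ (w, s) = ψ (w, 0) + s * ψ (0, 1) := by
    have : (w, s) = (w, (0 : ℝ)) + s • ((0 : V), (1 : ℝ)) := by ext <;> simp
    rw [this, map_add, map_smul, smul_eq_mul]
  set k := -ψ (0, 1)
  have habove (w : V) {s : ℝ} (hs : f (x + w) < s) : ψ (w, 0) < k * (s - f x) := by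
    have hlt := hψ (x + w, s) ⟨trivial, hs⟩
    have hadd : ψ (x + w, 0) = ψ (x, 0) + ψ (w, 0) := by rw [← map_add]; simp
    rw [hsplit, hsplit x, hadd] at hlt
    linarith
  have hk_pos : 0 < k := by
    simpa [Prod.mk_zero_zero] using habove 0 (s := f x + 1) (by simp)
  refine ⟨k⁻¹ • ψ.comp (ContinuousLinearMap.inl ℝ V ℝ), fun w => ?_⟩
  have hle : k⁻¹ * ψ (w, 0) ≤ f (x + w) - f x := by
    refine le_of_forall_pos_le_add fun ε hε => (inv_mul_le_iff₀ hk_pos).2 ?_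
    exact (habove w (s := f (x + w) + ε) (by simpa)).le.trans_eq (by ring)
  simpa [add_comm] using add_le_add_right hle (f x)

variable {V : Type*} [NormedAddCommGroup V] [NormedSpace ℝ V] {f N : V → ℝ} {C L : ℝ}

theorem hasFDerivAt_of_subgradient_of_secondDifference_le {x : V} {φ : StrongDual ℝ V}
    (hφ : ∀ w, f x + φ w ≤ f (x + w))
    (hmid : ∀ w, f (x + w) + f (x - w) ≤ 2 * f x + C * ‖w‖ ^ 2) :
    HasFDerivAt f φ x := by
  rw [hasFDerivAt_iff_isLittleO_nhds_zero]
  refine IsBigO.trans_isLittleO (IsBigO.of_bound C (Eventually.of_forall fun w => ?_))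
    (isLittleO_norm_pow_id one_lt_two)
  have hneg := hφ (-w)
  rw [map_neg, ← sub_eq_add_neg x] at hneg
  rw [Real.norm_of_nonneg (by linarith [hφ w]), Real.norm_of_nonneg (by positivity)]
  linarith [hmid w]

theorem exists_hasFDerivAt_of_secondDifference_le (hf : ConvexOn ℝ Set.univ f)
    (hcont : Continuous f) (hmid : ∀ x w, f (x + w) + f (x - w) ≤ 2 * f x + C * ‖w‖ ^ 2) (x : V) :
    ∃ φ : StrongDual ℝ V, HasFDerivAt f φ x ∧ ∀ w, f x + φ w ≤ f (x + w) := by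
  obtain ⟨φ, hφ⟩ := exists_subgradient_of_convexOn hf hcont x
  exact ⟨φ, hasFDerivAt_of_subgradient_of_secondDifference_le hφ (hmid x), hφ⟩

theorem le_add_half_mul_sq_of_secondDifference_le {x : V} {φ : StrongDual ℝ V}
    (hφ : ∀ w, f x + φ w ≤ f (x + w)) (hN : ∀ (t : ℝ) w, N (t • w) = |t| * N w)
    (hmid : ∀ x w, f (x + w) + f (x - w) ≤ 2 * f x + L * N w ^ 2) (w : V) :
    f (x + w) ≤ f x + φ w + L / 2 * N w ^ 2 := by
  have hdyadic (m : ℕ) (w : V) :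
      f (x + w) ≤ f x + φ w + (1 / 2 + (1 / 2) ^ (m + 1)) * (L * N w ^ 2) := by
    induction m generalizing w with
    | zero =>
      have hneg := hφ (-w)
      rw [map_neg, ← sub_eq_add_neg x] at hneg
      linarith [hmid x w]
    | succ m ih =>
      have hhalf := hmid (x + (1 / 2 : ℝ) • w) ((1 / 2 : ℝ) • w)
      have htwo : x + (1 / 2 : ℝ) • w + (1 / 2 : ℝ) • w = x + w := by module
      have hih := ih ((1 / 2 : ℝ) • w)
      rw [htwo, add_sub_cancel_right, hN, abs_of_pos one_half_pos] at hhalf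
      rw [map_smul, smul_eq_mul, hN, abs_of_pos one_half_pos] at hih
      rw [pow_succ]
      linarith
  have hlim : Tendsto (fun m : ℕ => f x + φ w + (1 / 2 + (1 / 2 : ℝ) ^ (m + 1)) * (L * N w ^ 2))
      atTop (𝓝 (f x + φ w + (1 / 2 + 0) * (L * N w ^ 2))) :=
    ((((tendsto_pow_atTop_nhds_zero_of_lt_one one_half_pos.le one_half_lt_one).comp
      (tendsto_add_atTop_nat 1)).const_add _).mul_const _).const_add _
  exact (ge_of_tendsto' hlim fun m => hdyadic m w).trans_eq (by ring)

theorem fderiv_sub_fderiv_le_of_secondDifference_le (hf : ConvexOn ℝ Set.univ f)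
    (hcont : Continuous f) (hN : ∀ (t : ℝ) w, N (t • w) = |t| * N w) (hN_nonneg : ∀ w, 0 ≤ N w)
    (hN_le : ∀ w, N w ≤ C * ‖w‖) (hL : 0 ≤ L)
    (hmid : ∀ x w, f (x + w) + f (x - w) ≤ 2 * f x + L * N w ^ 2) (x y v : V) :
    (fderiv ℝ f x - fderiv ℝ f y) v ≤ L * (N (x - y) * N v) := by
  have hmid_norm (x w : V) : f (x + w) + f (x - w) ≤ 2 * f x + L * C ^ 2 * ‖w‖ ^ 2 := by
    grw [hmid, mul_assoc, ← mul_pow, pow_le_pow_left₀ (hN_nonneg w) (hN_le w) 2]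
  obtain ⟨φ, hφ, hφ_le⟩ := exists_hasFDerivAt_of_secondDifference_le hf hcont hmid_norm x
  obtain ⟨ψ, hψ, hψ_le⟩ := exists_hasFDerivAt_of_secondDifference_le hf hcont hmid_norm y
  rw [hφ.fderiv, hψ.fderiv]
  have hquad (s : ℝ) :
      0 ≤ L / 2 * N v ^ 2 * (s * s) + -(φ - ψ) v * s + L / 2 * N (x - y) ^ 2 := by
    have hx := le_add_half_mul_sq_of_secondDifference_le hφ_le hN hmid ((-s) • v)
    have hy := le_add_half_mul_sq_of_secondDifference_le hψ_le hN hmid (x - y)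
    have hy_le := hψ_le (x - y + (-s) • v)
    rw [hN, mul_pow, sq_abs] at hx
    rw [add_sub_cancel] at hy
    rw [← add_assoc, add_sub_cancel] at hy_le
    simp only [map_smul, map_add, smul_eq_mul, sub_apply] at *
    linarith
  have hdiscrim := discrim_le_zero hquad
  refine le_of_abs_le (abs_le_of_sq_le_sq ?_ (mul_nonneg hL (mul_nonneg (hN_nonneg _)
    (hN_nonneg _))))
  rw [discrim] at hdiscrim
  linarith

end ConvexSmooth

/-! ### Functions of exponential type and weak majorization -/

section ExponentialType

theorem norm_le_mul_exp_re_of_norm_le_imaginary_axis {f : ℂ → ℂ} {B κ C : ℝ}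
    (hf : Differentiable ℂ f) (hexp : f =O[cobounded ℂ] fun z => Real.exp (B * ‖z‖))
    (hre : ∀ κ' > κ, (fun a : ℝ => f a) =O[atTop] fun a => Real.exp (κ' * a))
    (him : ∀ y : ℝ, ‖f (y * Complex.I)‖ ≤ C) {z : ℂ} (hz : 0 ≤ z.re) :
    ‖f z‖ ≤ C * Real.exp (κ * z.re) := by
  have hκ' (κ' : ℝ) (hκ' : κ < κ') : ‖f z‖ ≤ C * Real.exp (κ' * z.re) := by
    have hnorm (ζ : ℂ) : ‖f ζ * Complex.exp (-(κ' * ζ))‖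
        = ‖f ζ‖ / Real.exp (κ' * ζ.re) := by
      rw [norm_mul, Complex.norm_exp, Complex.neg_re, Complex.re_ofReal_mul, Real.exp_neg,
        div_eq_mul_inv]
    have hbound := PhragmenLindelof.right_half_plane_of_bounded_on_real (C := C)
      (f := fun ζ => f ζ * Complex.exp (-(κ' * ζ))) (hf.mul (by fun_prop)).diffContOnCl
      ⟨1, one_lt_two, B + |κ'|, ?_⟩ ?_ (fun y => ?_) hz
    · rwa [hnorm, div_le_iff₀ (Real.exp_pos _)] at hbound
    · refine ((hexp.mono inf_le_left).mul (IsBigO.of_bound 1 (Eventually.of_forall fun ζ => ?_)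
        (g := fun ζ => Real.exp (|κ'| * ‖ζ‖)))).congr_right fun ζ => ?_
      · rw [Complex.norm_exp, Real.norm_eq_abs, Real.abs_exp, one_mul]
        refine Real.exp_le_exp.2 ((Complex.re_le_norm _).trans_eq ?_)
        rw [norm_neg, norm_mul, Complex.norm_real, Real.norm_eq_abs]
      · rw [← Real.exp_add, Real.rpow_one, add_mul]
    · obtain ⟨c, hc⟩ := (hre κ' hκ').bound
      refine isBoundedUnder_of_eventually_le (a := c) ?_
      filter_upwards [hc] with a ha
      rwa [hnorm, Complex.ofReal_re, div_le_iff₀ (Real.exp_pos _), ← Real.abs_exp (κ' * a)]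
    · rw [hnorm]
      simpa using him y
  have hlim : Tendsto (fun κ' => C * Real.exp (κ' * z.re)) (𝓝[>] κ)
      (𝓝 (C * Real.exp (κ * z.re))) :=
    (Continuous.tendsto (by fun_prop) κ).mono_left nhdsWithin_le_nhds
  exact ge_of_tendsto hlim (eventually_mem_nhdsWithin.mono hκ')

theorem le_of_frequently_exp_natCast_mul_le {a b C : ℝ}
    (h : ∃ᶠ m : ℕ in atTop, Real.exp (m * a) ≤ C * Real.exp (m * b)) : a ≤ b := by
  by_contra! hlt
  have hlim : Tendsto (fun m : ℕ => Real.exp (m * (a - b))) atTop atTop :=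
    Real.tendsto_exp_atTop.comp (tendsto_natCast_atTop_atTop.atTop_mul_const (sub_pos.2 hlt))
  refine h ((hlim.eventually_gt_atTop C).mono fun m hm => ?_)
  rw [mul_sub, Real.exp_sub, lt_div_iff₀ (Real.exp_pos _)] at hm
  exact hm.not_ge

theorem polynomial_eval_isBigO_pow {α : Type*} {l : Filter α} {f : α → ℂ} {g : α → ℝ}
    (hf : f =O[l] g) (hg : ∀ᶠ x in l, 1 ≤ g x) (q : Polynomial ℂ) :
    (fun x => q.eval (f x)) =O[l] fun x => g x ^ q.natDegree := by
  simp only [Polynomial.eval_eq_sum_range]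
  refine IsBigO.fun_sum fun i hi => ((hf.pow i).trans ?_).const_mul_left _
  refine IsBigO.of_bound 1 (hg.mono fun x hx => ?_)
  rw [norm_pow, norm_pow, one_mul]
  exact pow_le_pow_right₀ (hx.trans (le_abs_self _)) (Finset.mem_range_succ_iff.1 hi)

theorem cosh_le_exp_of_real_on_imaginary_axis {f : ℂ → ℂ} {B σ θ a : ℝ} (hB : 0 ≤ B) (hσ : 0 ≤ σ)
    (hf : Differentiable ℂ f) (hexp : f =O[cobounded ℂ] fun z => Real.exp (B * ‖z‖))
    (hre : ∀ κ > σ, (fun a : ℝ => f a) =O[atTop] fun a => Real.exp (κ * a))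
    (him : ∀ y : ℝ, ∃ c : ℝ, |c| ≤ 1 ∧ f (y * Complex.I) = c)
    (ha : 0 ≤ a) (hfa : f a = Real.cosh θ) {m : ℕ} (hm : 0 < m) :
    Real.cosh (m * θ) ≤ Real.exp (m * (σ * a)) := by
  set T := Polynomial.Chebyshev.T ℂ (m : ℤ) with hT
  have hdeg : T.natDegree = m := by simp [hT, Polynomial.Chebyshev.natDegree_T]
  have hT_real (c : ℝ) : ‖T.eval (c : ℂ)‖ = |(Polynomial.Chebyshev.T ℝ m).eval c| := by
    rw [hT, ← Polynomial.Chebyshev.complex_ofReal_eval_T, Complex.norm_real, Real.norm_eq_abs]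
  have hpow (c d : ℝ) : Real.exp (c * d) ^ T.natDegree = Real.exp (m * c * d) := by
    rw [hdeg, ← Real.exp_nat_mul, mul_assoc]
  have hbound := norm_le_mul_exp_re_of_norm_le_imaginary_axis (f := fun z => T.eval (f z))
    (B := m * B) (κ := m * σ) (C := 1) (z := a) (T.differentiable.comp hf) ?_ (fun κ hκ => ?_)
    (fun y => ?_) ha
  · rw [hfa, hT_real, Polynomial.Chebyshev.T_real_cosh, one_mul, mul_assoc] at hbound
    exact (le_abs_self _).trans (by simpa using hbound)
  · exact (polynomial_eval_isBigO_pow hexp (Eventually.of_forall fun z =>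
      Real.one_le_exp (by positivity)) T).congr_right fun z => hpow _ _
  · have hκm : σ < κ / m := (lt_div_iff₀' (by positivity)).2 hκ
    have hone : ∀ᶠ a : ℝ in atTop, 1 ≤ Real.exp (κ / m * a) := by
      filter_upwards [eventually_ge_atTop 0] with a ha
      exact Real.one_le_exp (mul_nonneg (hσ.trans hκm.le) ha)
    refine (polynomial_eval_isBigO_pow (hre _ hκm) hone T).congr_right fun a => ?_
    rw [hpow, mul_div_cancel₀ _ (by positivity)]
  · obtain ⟨c, hc, hfc⟩ := him y
    rw [hfc, hT_real]
    exact Polynomial.Chebyshev.abs_eval_T_real_le_one _ hc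

theorem le_cosh_of_real_on_imaginary_axis {f : ℂ → ℂ} {B σ a c : ℝ} (hB : 0 ≤ B) (hσ : 0 ≤ σ)
    (hf : Differentiable ℂ f) (hexp : f =O[cobounded ℂ] fun z => Real.exp (B * ‖z‖))
    (hre : ∀ κ > σ, (fun a : ℝ => f a) =O[atTop] fun a => Real.exp (κ * a))
    (him : ∀ y : ℝ, ∃ c : ℝ, |c| ≤ 1 ∧ f (y * Complex.I) = c)
    (ha : 0 ≤ a) (hfa : f a = c) : c ≤ Real.cosh (σ * a) := by
  rcases le_or_gt c 1 with hc | hc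
  · exact hc.trans (Real.one_le_cosh _)
  rw [← Real.cosh_arcosh hc.le] at hfa ⊢
  have hle : Real.arcosh c ≤ σ * a := by
    refine le_of_frequently_exp_natCast_mul_le (C := 2)
      ((eventually_gt_atTop 0).mono fun m hm => ?_).frequently
    have hcosh := cosh_le_exp_of_real_on_imaginary_axis hB hσ hf hexp hre him ha hfa hm
    rw [Real.cosh_eq] at hcosh
    linarith [Real.exp_pos (-(m * Real.arcosh c))]
  rwa [Real.cosh_le_cosh, abs_of_nonneg (Real.arcosh_nonneg hc.le), abs_of_nonneg (by positivity)]

theorem le_mul_cosh_of_real_on_imaginary_axis {f : ℂ → ℂ} {B σ M a c : ℝ} (hB : 0 ≤ B)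
    (hσ : 0 ≤ σ) (hM : 0 < M) (hf : Differentiable ℂ f)
    (hexp : f =O[cobounded ℂ] fun z => Real.exp (B * ‖z‖))
    (hre : ∀ κ > σ, (fun a : ℝ => f a) =O[atTop] fun a => Real.exp (κ * a))
    (him : ∀ y : ℝ, ∃ c : ℝ, |c| ≤ M ∧ f (y * Complex.I) = c)
    (ha : 0 ≤ a) (hfa : f a = c) : c ≤ M * Real.cosh (σ * a) := by
  rw [← inv_mul_le_iff₀ hM]
  refine le_cosh_of_real_on_imaginary_axis (f := fun z => (M⁻¹ : ℝ) * f z) hB hσ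
    (hf.const_mul _) (hexp.const_mul_left _) (fun κ hκ => (hre κ hκ).const_mul_left _)
    (fun y => ?_) ha (by rw [hfa, Complex.ofReal_mul])
  obtain ⟨c, hc, hfc⟩ := him y
  refine ⟨M⁻¹ * c, ?_, by rw [hfc, Complex.ofReal_mul]⟩
  rwa [abs_mul, abs_of_pos (inv_pos.2 hM), inv_mul_le_iff₀ hM, mul_one]

theorem eventually_le_mul_of_posHomogeneous {V : Type*} [AddCommGroup V] [Module ℝ V]
    [TopologicalSpace V] [ContinuousAdd V] [ContinuousSMul ℝ V] {φ : V → ℝ} (hφ : Continuous φ)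
    (hsmul : ∀ a > 0, ∀ z, φ (a • z) = a * φ z) (y w : V) {κ : ℝ} (hκ : φ w < κ) :
    ∀ᶠ a : ℝ in atTop, φ (y + a • w) ≤ κ * a := by
  have hlim : Tendsto (fun a : ℝ => φ (a⁻¹ • y + w)) atTop (𝓝 (φ w)) :=
    (Continuous.tendsto' (f := fun s : ℝ => φ (s • y + w)) (by fun_prop) 0 _ (by simp)).comp
      tendsto_inv_atTop_zero
  filter_upwards [hlim.eventually_lt_const hκ, eventually_gt_atTop 0] with a hlt ha
  have hscale : y + a • w = a • (a⁻¹ • y + w) := by rw [smul_add, smul_inv_smul₀ ha.ne']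
  rw [hscale, hsmul a ha, mul_comm]
  exact mul_le_mul_of_nonneg_right hlt.le ha.le

end ExponentialType

section WeakMajorization

theorem exp_mul_max_sub_eq_indicator (a τ : ℝ) : Real.exp τ * max (a - τ) 0
    = Real.exp a * (Set.Ioi 0).indicator (fun s => Real.exp (-s) * s ^ ((2 : ℝ) - 1)) (a - τ) := by
  have hpow : (2 : ℝ) - 1 = 1 := by norm_num
  rcases lt_or_ge 0 (a - τ) with hpos | hneg
  · rw [Set.indicator_of_mem (Set.mem_Ioi.2 hpos), max_eq_left hpos.le, hpow, Real.rpow_one,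
      ← mul_assoc, ← Real.exp_add]
    ring_nf
  · rw [Set.indicator_of_notMem (Set.notMem_Ioi.2 hneg), max_eq_right hneg, mul_zero, mul_zero]

theorem integrable_exp_mul_max_sub (a : ℝ) :
    MeasureTheory.Integrable fun τ : ℝ => Real.exp τ * max (a - τ) 0 := by
  simp only [exp_mul_max_sub_eq_indicator a]
  exact (((MeasureTheory.integrable_indicator_iff measurableSet_Ioi).2
    (Real.GammaIntegral_convergent two_pos)).comp_sub_left a).const_mul _

theorem integral_exp_mul_max_sub (a : ℝ) : ∫ τ : ℝ, Real.exp τ * max (a - τ) 0 = Real.exp a := by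
  simp only [exp_mul_max_sub_eq_indicator a]
  rw [MeasureTheory.integral_const_mul, MeasureTheory.integral_sub_left_eq_self,
    MeasureTheory.integral_indicator measurableSet_Ioi, ← Real.Gamma_eq_integral two_pos,
    Real.Gamma_two, mul_one]

theorem sum_exp_le_sum_exp_of_weakly_majorized {ι : Type*} [Fintype ι] {a b : ι → ℝ}
    (h : ∀ τ, ∑ j, max (a j - τ) 0 ≤ ∑ j, max (b j - τ) 0) :
    ∑ j, Real.exp (a j) ≤ ∑ j, Real.exp (b j) := by
  have hsum (c : ι → ℝ) : ∑ j, Real.exp (c j) = ∫ τ : ℝ, Real.exp τ * ∑ j, max (c j - τ) 0 := by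
    simp only [Finset.mul_sum]
    rw [MeasureTheory.integral_finsetSum _ fun j _ => integrable_exp_mul_max_sub (c j)]
    simp only [integral_exp_mul_max_sub]
  have hintegrable (c : ι → ℝ) :
      MeasureTheory.Integrable fun τ : ℝ => Real.exp τ * ∑ j, max (c j - τ) 0 := by
    simp only [Finset.mul_sum]
    exact MeasureTheory.integrable_finsetSum _ fun j _ => integrable_exp_mul_max_sub (c j)
  rw [hsum, hsum]
  exact MeasureTheory.integral_mono (hintegrable a) (hintegrable b) fun τ =>
    mul_le_mul_of_nonneg_left (h τ) (Real.exp_pos τ).le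

theorem norm_two_add_exp_le {m : ℝ} (hm : 0 ≤ m) (t : ℂ) :
    ‖2 + Complex.exp (m * t)‖ ≤ 3 * Real.exp (m * max t.re 0) := by
  have htri : ‖2 + Complex.exp (m * t)‖ ≤ 2 + Real.exp (m * t.re) := by
    simpa [Complex.norm_exp] using norm_add_le 2 (Complex.exp (m * t))
  have hexp : Real.exp (m * t.re) ≤ Real.exp (m * max t.re 0) := by gcongr; exact le_max_left _ _
  have hone : 1 ≤ Real.exp (m * max t.re 0) := Real.one_le_exp (by positivity)
  linarith

theorem norm_prod_two_add_exp_le {ι : Type*} [Fintype ι] {m : ℝ} (hm : 0 ≤ m) (v : ι → ℂ) :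
    ‖∏ j, (2 + Complex.exp (m * v j))‖
      ≤ 3 ^ Fintype.card ι * Real.exp (m * ∑ j, max (v j).re 0) := by
  rw [norm_prod, Finset.mul_sum, Real.exp_sum, ← Finset.card_univ, ← Finset.prod_const,
    ← Finset.prod_mul_distrib]
  exact Finset.prod_le_prod (fun _ _ => norm_nonneg _) fun j _ => norm_two_add_exp_le hm (v j)

theorem eventually_half_exp_le_norm_two_add_exp (t : ℂ) :
    ∀ᶠ m : ℕ in atTop, 1 / 2 * Real.exp (m * max t.re 0) ≤ ‖2 + Complex.exp (m * t)‖ := by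
  have hnorm (m : ℕ) : ‖Complex.exp (m * t)‖ = Real.exp (m * t.re) := by
    simp [Complex.norm_exp]
  rcases le_or_gt t.re 0 with hneg | hpos
  · refine Eventually.of_forall fun m => ?_
    have hsmall : Real.exp (m * t.re) ≤ 1 :=
      Real.exp_le_one_iff.2 (mul_nonpos_of_nonneg_of_nonpos m.cast_nonneg hneg)
    have htri := norm_sub_le_norm_add (2 : ℂ) (Complex.exp (m * t))
    rw [hnorm, Complex.norm_ofNat] at htri
    rw [max_eq_right hneg, mul_zero, Real.exp_zero]
    linarith
  · have hlim : Tendsto (fun m : ℕ => Real.exp (m * t.re)) atTop atTop :=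
      Real.tendsto_exp_atTop.comp (tendsto_natCast_atTop_atTop.atTop_mul_const hpos)
    filter_upwards [hlim.eventually_ge_atTop 4] with m hm
    have htri := norm_sub_le_norm_add (Complex.exp (m * t)) 2
    rw [hnorm, Complex.norm_ofNat, add_comm] at htri
    rw [max_eq_left hpos.le]
    linarith

theorem sum_max_re_le_of_norm_prod_two_add_exp_le {ι : Type*} [Fintype ι] {v : ι → ℂ} {C R : ℝ}
    (h : ∀ m : ℕ, ‖∏ j, (2 + Complex.exp (m * v j))‖ ≤ C * Real.exp (m * R)) :
    ∑ j, max (v j).re 0 ≤ R := by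
  refine le_of_frequently_exp_natCast_mul_le (C := 2 ^ Fintype.card ι * C)
    (Eventually.frequently ?_)
  filter_upwards [eventually_all.2 fun j => eventually_half_exp_le_norm_two_add_exp (v j)] with m hm
  have hprod := (Finset.prod_le_prod (s := Finset.univ) (fun _ _ => by positivity)
    fun j _ => hm j).trans ((norm_prod _ _).symm.trans_le (h m))
  rw [Finset.prod_mul_distrib, ← Real.exp_sum, ← Finset.mul_sum, Finset.prod_const,
    Finset.card_univ, one_div, inv_pow, inv_mul_le_iff₀ (by positivity)] at hprod
  rwa [mul_assoc]

end WeakMajorization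

/-! ### Hyperbolic forms -/

namespace IsSplitForm

variable {p : E → ℂ} {e : E} {n : ℕ} (h : IsSplitForm p e n)

/-- The sum of the positive parts of the real parts of the eigenvalues. Its values along the
translates `z - τ • e` govern weak majorization between eigenvalue vectors. -/
noncomputable def positivePartSum (z : E) : ℝ :=
  ∑ j, max (h.eigenvalues z j).re 0

/-- The sum of the exponentials of the eigenvalues, an entire function on complex lines. -/
noncomputable def traceExp (z : E) : ℂ :=
  ∑ j, Complex.exp (h.eigenvalues z j)

/-- The sum of the exponentials of the real parts of the eigenvalues, which agrees with `traceExp`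
where the eigenvalues are real. -/
noncomputable def realTraceExp (z : E) : ℝ :=
  ∑ j, Real.exp (h.eigenvalues z j).re

theorem continuous_sum_eigenvalues {φ : ℂ → ℝ} (hφ : Continuous φ) :
    Continuous fun z => ∑ j, φ (h.eigenvalues z j) :=
  h.continuous_comp_eigenvalues (F := fun v => ∑ j, φ (v j)) (by fun_prop)
    fun v σ => Equiv.sum_comp σ fun j => φ (v j)

theorem continuous_positivePartSum : Continuous h.positivePartSum :=
  h.continuous_sum_eigenvalues (φ := fun t => max t.re 0) (by fun_prop)

theorem continuous_realTraceExp : Continuous h.realTraceExp :=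
  h.continuous_sum_eigenvalues (φ := fun t => Real.exp t.re) (by fun_prop)

theorem positivePartSum_smul {a : ℝ} (ha : 0 ≤ a) (z : E) :
    h.positivePartSum (a • z) = a * h.positivePartSum z := by
  rw [positivePartSum, ← Complex.coe_smul,
    h.sum_eigenvalues_eq (fun t => max t.re 0) ((h.isEigenvalueVector_eigenvalues z).smul h a),
    positivePartSum, Finset.mul_sum]
  refine Finset.sum_congr rfl fun j _ => ?_
  rw [Pi.smul_apply, smul_eq_mul, Complex.re_ofReal_mul, mul_max_of_nonneg _ _ ha, mul_zero]

theorem positivePartSum_sub_smul (z : E) (τ : ℝ) :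
    h.positivePartSum (z - (τ : ℂ) • e) = ∑ j, max ((h.eigenvalues z j).re - τ) 0 := by
  rw [positivePartSum, h.sum_eigenvalues_eq (fun t => max t.re 0)
    ((h.isEigenvalueVector_eigenvalues z).sub_smul τ)]
  simp only [Complex.sub_re, Complex.ofReal_re]

theorem re_eigenvalues_le_norm (z : E) (j : Fin n) : (h.eigenvalues z j).re ≤ ‖h.eigenvalues z‖ :=
  (Complex.re_le_norm _).trans (norm_le_pi_norm _ j)

theorem positivePartSum_le (z : E) : h.positivePartSum z ≤ n * ‖h.eigenvalues z‖ := by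
  simpa [positivePartSum] using Finset.sum_le_card_nsmul Finset.univ _ _ fun j _ =>
    max_le (h.re_eigenvalues_le_norm z j) (norm_nonneg _)

theorem norm_traceExp_le (z : E) : ‖h.traceExp z‖ ≤ h.realTraceExp z := by
  simpa only [Complex.norm_exp, traceExp, realTraceExp] using
    norm_sum_le Finset.univ fun j => Complex.exp (h.eigenvalues z j)

theorem realTraceExp_le (z : E) : h.realTraceExp z ≤ n * Real.exp ‖h.eigenvalues z‖ := by
  simpa [realTraceExp] using Finset.sum_le_card_nsmul Finset.univ _ _ fun j _ =>
    Real.exp_le_exp.2 (h.re_eigenvalues_le_norm z j)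

theorem realTraceExp_pos (hn : 0 < n) (z : E) : 0 < h.realTraceExp z :=
  haveI : Nonempty (Fin n) := ⟨⟨0, hn⟩⟩
  Finset.sum_pos (fun _ _ => Real.exp_pos _) Finset.univ_nonempty

theorem realTraceExp_add_smul_isBigO (x w : E) {κ : ℝ} (hκ : ‖h.eigenvalues w‖ < κ) :
    (fun a : ℝ => h.realTraceExp (x + a • w)) =O[atTop] fun a => Real.exp (κ * a) := by
  have hnorm := eventually_le_mul_of_posHomogeneous (φ := fun z => ‖h.eigenvalues z‖)
    (h.continuous_comp_eigenvalues continuous_norm norm_comp_perm)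
    (fun a ha z => by
      rw [← Complex.coe_smul, h.norm_eigenvalues_smul, Complex.norm_of_nonneg ha.le])
    x w hκ
  refine IsBigO.of_bound n (hnorm.mono fun a ha => ?_)
  have hnonneg : 0 ≤ h.realTraceExp (x + a • w) :=
    Finset.sum_nonneg fun _ _ => (Real.exp_pos _).le
  rw [Real.norm_of_nonneg hnonneg, Real.norm_eq_abs, Real.abs_exp]
  exact (h.realTraceExp_le _).trans (by gcongr)

/-- The smoothed largest eigenvalue `f_μ(z) = μ log ∑ exp (λ_j(z) / μ)`, where real parts are taken
so that it is defined at all complex points. -/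
noncomputable def smoothedMaxEigenvalue (μ : ℝ) (z : E) : ℝ :=
  μ * Real.log (h.realTraceExp (μ⁻¹ • z))

theorem smoothedMaxEigenvalue_eq (μ : ℝ) (z : E) :
    h.smoothedMaxEigenvalue μ z = μ * Real.log (∑ j, Real.exp ((h.eigenvalues z j).re / μ)) := by
  rw [smoothedMaxEigenvalue, realTraceExp, ← Complex.coe_smul,
    h.sum_eigenvalues_eq (fun t => Real.exp t.re)
      ((h.isEigenvalueVector_eigenvalues z).smul h (μ⁻¹ : ℝ))]
  simp only [Pi.smul_apply, smul_eq_mul, Complex.re_ofReal_mul, inv_mul_eq_div]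

theorem continuous_smoothedMaxEigenvalue (hn : 0 < n) (μ : ℝ) :
    Continuous (h.smoothedMaxEigenvalue μ) :=
  continuous_const.mul ((h.continuous_realTraceExp.comp (continuous_const_smul μ⁻¹)).log
    fun _ => (h.realTraceExp_pos hn _).ne')

end IsSplitForm

theorem isBigO_exp_norm_comp_add_smul {F : Type*} [Norm F] {g : E → F} {B C : ℝ} (hB : 0 ≤ B)
    (hC : 0 ≤ C) (hg : ∀ z, ‖g z‖ ≤ C * Real.exp (B * ‖z‖)) (x w : E) (l : Filter ℂ) :
    (fun ζ => g (x + ζ • w)) =O[l] fun ζ => Real.exp (B * ‖w‖ * ‖ζ‖) := by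
  refine IsBigO.of_bound (C * Real.exp (B * ‖x‖)) (Eventually.of_forall fun ζ => (hg _).trans ?_)
  rw [Real.norm_eq_abs, Real.abs_exp, mul_assoc, ← Real.exp_add]
  gcongr
  calc B * ‖x + ζ • w‖ ≤ B * (‖x‖ + ‖ζ‖ * ‖w‖) := by grw [norm_add_le, norm_smul]
    _ = B * ‖x‖ + B * ‖w‖ * ‖ζ‖ := by ring

section HyperbolicForms

variable [StarAddMonoid E]

/-- The complexification of a real form that is hyperbolic in direction `e`; the real points are
the self-adjoint ones. -/
structure IsHyperbolicForm (p : E → ℂ) (e : E) (n : ℕ) : Prop extends IsSplitForm p e n where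
  map_star : ∀ z, p (star z) = star (p z)
  isSelfAdjoint : IsSelfAdjoint e
  im_eq_zero : ∀ x, IsSelfAdjoint x → ∀ t : ℂ, p (x - t • e) = 0 → t.im = 0

namespace IsHyperbolicForm

variable {p : E → ℂ} {e x : E} {n : ℕ} (h : IsHyperbolicForm p e n)

theorem im_eigenvalues (hx : IsSelfAdjoint x) (j : Fin n) : (h.eigenvalues x j).im = 0 :=
  h.im_eq_zero x hx _ ((h.isEigenvalueVector_eigenvalues x).eq_zero j)

theorem positivePartSum_I_smul (hx : IsSelfAdjoint x) :
    h.positivePartSum (Complex.I • x) = 0 := by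
  rw [IsSplitForm.positivePartSum, h.sum_eigenvalues_eq (fun t => max t.re 0)
    ((h.isEigenvalueVector_eigenvalues x).smul h.toIsSplitForm Complex.I)]
  refine Finset.sum_eq_zero fun j _ => ?_
  simp [h.im_eigenvalues hx]

theorem traceExp_eq_ofReal (hx : IsSelfAdjoint x) : h.traceExp x = h.realTraceExp x := by
  rw [IsSplitForm.traceExp, IsSplitForm.realTraceExp, Complex.ofReal_sum]
  refine Finset.sum_congr rfl fun j _ => ?_
  rw [Complex.ofReal_exp, Complex.ext (z := h.eigenvalues x j) (Complex.ofReal_re _).symm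
    (by rw [h.im_eigenvalues hx, Complex.ofReal_im]), Complex.ofReal_re]

end IsHyperbolicForm

variable [StarModule ℂ E]

theorem IsEigenvalueVector.star {p : E → ℂ} {e z : E} {n : ℕ} {v : Fin n → ℂ}
    (h : IsHyperbolicForm p e n) (hv : IsEigenvalueVector p e z v) :
    IsEigenvalueVector p e (star z) (star v) := fun t => by
  have hz : Star.star z - t • e = Star.star (z - Star.star t • e) := by
    rw [star_sub, star_smul, star_star, h.isSelfAdjoint]
  have he : Star.star (p e) = p e := by rw [← h.map_star, h.isSelfAdjoint]
  rw [hz, h.map_star, hv, star_mul', he, star_prod]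
  simp only [star_sub, star_star, Pi.star_apply]

namespace IsHyperbolicForm

variable {p : E → ℂ} {e x y w : E} {n : ℕ} (h : IsHyperbolicForm p e n)

theorem norm_prod_two_add_exp_eigenvalues_le (hx : IsSelfAdjoint x) (hy : IsSelfAdjoint y)
    {m : ℝ} (hm : 0 ≤ m) :
    ‖∏ j, (2 + Complex.exp (m * h.eigenvalues (x + Complex.I • y) j))‖
      ≤ 3 ^ n * Real.exp (m * h.positivePartSum x) := by
  obtain ⟨B, hB₀, hB⟩ := h.exists_norm_eigenvalues_le
  set g : E → ℂ := fun z => ∏ j, (2 + Complex.exp (m * h.eigenvalues z j))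
  have hg (z : E) : ‖g z‖ ≤ 3 ^ n * Real.exp (m * h.positivePartSum z) := by
    simpa [g, IsSplitForm.positivePartSum] using norm_prod_two_add_exp_le hm (h.eigenvalues z)
  have hbound := norm_le_mul_exp_re_of_norm_le_imaginary_axis (B := m * (n * B) * ‖x‖) (C := 3 ^ n)
    (κ := m * h.positivePartSum x) (f := fun ζ => g (Complex.I • y + ζ • x)) (z := 1)
    (h.differentiable_prod_eigenvalues (φ := fun t => 2 + Complex.exp (m * t)) (by fun_prop)
      (by fun_prop)) ?_ (fun κ hκ => ?_) (fun η => ?_) zero_le_one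
  · simpa only [one_smul, Complex.one_re, mul_one, add_comm (Complex.I • y)] using hbound
  · refine isBigO_exp_norm_comp_add_smul (by positivity) (C := 3 ^ n) (by positivity)
      (fun z => ?_) _ _ _
    grw [hg, h.positivePartSum_le, hB]
    simp only [mul_assoc]
    rfl
  · refine IsBigO.of_bound (3 ^ n) ((eventually_le_mul_of_posHomogeneous
      (h.continuous_positivePartSum.const_mul m) (fun a ha z => ?_) (Complex.I • y) x hκ).mono
        fun a ha => ?_)
    · rw [h.positivePartSum_smul ha.le, mul_left_comm]
    · grw [hg, Complex.coe_smul, ha, Real.norm_eq_abs, Real.abs_exp]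
  · have hline : Complex.I • y + ((η : ℂ) * Complex.I) • x = Complex.I • (y + η • x) := by
      rw [smul_add, mul_comm, mul_smul, Complex.coe_smul]
    have hzero := h.positivePartSum_I_smul (hy.add ((IsSelfAdjoint.all η).smul hx))
    simpa only [hline, hzero, mul_zero, Real.exp_zero, mul_one] using hg (Complex.I • (y + η • x))

theorem positivePartSum_add_I_smul_le (hx : IsSelfAdjoint x) (hy : IsSelfAdjoint y) :
    h.positivePartSum (x + Complex.I • y) ≤ h.positivePartSum x :=
  sum_max_re_le_of_norm_prod_two_add_exp_le fun m => by
    simpa using h.norm_prod_two_add_exp_eigenvalues_le hx hy m.cast_nonneg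

theorem realTraceExp_add_I_smul_le (hx : IsSelfAdjoint x) (hy : IsSelfAdjoint y) :
    h.realTraceExp (x + Complex.I • y) ≤ h.realTraceExp x := by
  refine sum_exp_le_sum_exp_of_weakly_majorized fun τ => ?_
  rw [← h.positivePartSum_sub_smul, ← h.positivePartSum_sub_smul, add_sub_right_comm,
    Complex.coe_smul]
  exact h.positivePartSum_add_I_smul_le (hx.sub ((IsSelfAdjoint.all τ).smul h.isSelfAdjoint)) hy

theorem norm_traceExp_add_smul_le (hx : IsSelfAdjoint x) (hw : IsSelfAdjoint w) (ζ : ℂ) :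
    ‖h.traceExp (x + ζ • w)‖ ≤ h.realTraceExp (x + ζ.re • w) := by
  have hline : x + ζ • w = x + ζ.re • w + Complex.I • ζ.im • w := by
    conv_lhs => rw [← Complex.re_add_im ζ, add_smul, mul_comm, mul_smul, ← add_assoc]
    simp only [Complex.coe_smul]
  rw [hline]
  exact (h.norm_traceExp_le _).trans (h.realTraceExp_add_I_smul_le
    (hx.add ((IsSelfAdjoint.all _).smul hw)) ((IsSelfAdjoint.all _).smul hw))

theorem traceExp_star (z : E) : h.traceExp (star z) = star (h.traceExp z) := by
  rw [IsSplitForm.traceExp, h.sum_eigenvalues_eq _ ((h.isEigenvalueVector_eigenvalues z).star h),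
    IsSplitForm.traceExp, star_sum]
  exact Finset.sum_congr rfl fun j _ => Complex.exp_conj _

theorem realTraceExp_add_smul_sub_le (hx : IsSelfAdjoint x) (hy : IsSelfAdjoint y) {s : ℝ}
    (hs : s ∈ Set.Icc 0 1) :
    h.realTraceExp (x + s • (y - x)) ≤ h.realTraceExp x ^ (1 - s) * h.realTraceExp y ^ s := by
  have hw : IsSelfAdjoint (y - x) := hy.sub hx
  have hline (ζ : ℂ) := h.norm_traceExp_add_smul_le hx hw ζ
  have hcont : Continuous fun s : ℝ => h.realTraceExp (x + s • (y - x)) :=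
    h.continuous_realTraceExp.comp (by fun_prop)
  obtain ⟨C, hC⟩ := isCompact_Icc.exists_bound_of_continuousOn (s := Set.Icc (0 : ℝ) 1)
    hcont.continuousOn
  have hinterp := Complex.HadamardThreeLines.norm_le_interp_of_mem_verticalClosedStrip₀₁'
    (fun ζ : ℂ => h.traceExp (x + ζ • (y - x))) (z := s) (a := h.realTraceExp x)
    (b := h.realTraceExp y) (by simpa [Complex.HadamardThreeLines.verticalClosedStrip] using hs)
    (h.differentiable_sum_eigenvalues (by fun_prop) Complex.differentiable_exp).diffContOnCl
    ⟨C, ?_⟩ (fun ζ hζ => ?_) (fun ζ hζ => ?_)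
  · rw [Complex.coe_smul, h.traceExp_eq_ofReal (hx.add ((IsSelfAdjoint.all s).smul hw)),
      Complex.norm_real] at hinterp
    exact (le_abs_self _).trans hinterp
  · rintro _ ⟨ζ, hζ, rfl⟩
    exact (hline ζ).trans ((le_abs_self _).trans (hC ζ.re hζ))
  · have hre : ζ.re = 0 := hζ
    simpa [hre] using hline ζ
  · have hre : ζ.re = 1 := hζ
    simpa [hre] using hline ζ

theorem convexOn_log_realTraceExp (hn : 0 < n) :
    ConvexOn ℝ {x | IsSelfAdjoint x} fun x => Real.log (h.realTraceExp x) := by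
  refine ⟨fun x hx y hy a b _ _ _ => IsSelfAdjoint.add ((IsSelfAdjoint.all a).smul hx)
    ((IsSelfAdjoint.all b).smul hy), fun x hx y hy a b ha hb hab => ?_⟩
  have hline : a • x + b • y = x + b • (y - x) := by
    rw [eq_sub_of_add_eq hab, sub_smul, one_smul, smul_sub]
    abel
  have hpos := h.realTraceExp_pos hn
  have hlog := Real.log_le_log (hpos _)
    (h.realTraceExp_add_smul_sub_le hx hy (s := b) ⟨hb, by linarith⟩)
  rwa [Real.log_mul (Real.rpow_pos_of_pos (hpos _) _).ne' (Real.rpow_pos_of_pos (hpos _) _).ne',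
    Real.log_rpow (hpos _), Real.log_rpow (hpos _), ← hline, ← eq_sub_of_add_eq hab] at hlog

theorem traceExp_add_ofReal_smul (hx : IsSelfAdjoint x) (hw : IsSelfAdjoint w) (a : ℝ) :
    h.traceExp (x + (a : ℂ) • w) = h.realTraceExp (x + a • w) := by
  rw [Complex.coe_smul, h.traceExp_eq_ofReal (hx.add ((IsSelfAdjoint.all a).smul hw))]

theorem exists_ofReal_eq_traceExp_add_traceExp_neg (hx : IsSelfAdjoint x) (hw : IsSelfAdjoint w)
    (η : ℝ) : ∃ c : ℝ, |c| ≤ 2 * h.realTraceExp x ∧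
      h.traceExp (x + (η * Complex.I) • w) + h.traceExp (x + (η * Complex.I) • (-w)) = c := by
  refine ⟨2 * (h.traceExp (x + (η * Complex.I) • w)).re, ?_, ?_⟩
  · have hnorm := h.norm_traceExp_add_smul_le hx hw ((η : ℂ) * Complex.I)
    simp only [Complex.re_ofReal_mul, Complex.I_re, mul_zero, zero_smul, add_zero] at hnorm
    grw [abs_mul, abs_two, Complex.abs_re_le_norm, hnorm]
  · have hstar : x + ((η : ℂ) * Complex.I) • (-w) = star (x + ((η : ℂ) * Complex.I) • w) := by
      rw [star_add, star_smul, hx, hw]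
      simp
    rw [hstar, h.traceExp_star, Complex.star_def, Complex.add_conj]

theorem realTraceExp_add_add_realTraceExp_sub_le (hn : 0 < n) (hx : IsSelfAdjoint x)
    (hw : IsSelfAdjoint w) :
    h.realTraceExp (x + w) + h.realTraceExp (x - w)
      ≤ 2 * h.realTraceExp x * Real.cosh ‖h.eigenvalues w‖ := by
  obtain ⟨B, hB₀, hB⟩ := h.exists_norm_eigenvalues_le
  have hpos := h.realTraceExp_pos hn x
  have hneg : ‖h.eigenvalues (-w)‖ = ‖h.eigenvalues w‖ := by
    simpa using h.norm_eigenvalues_smul (-1) w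
  have htrace (z : E) : ‖h.traceExp z‖ ≤ n * Real.exp (B * ‖z‖) := by
    grw [h.norm_traceExp_le, h.realTraceExp_le, hB]
  have hdiff (u : E) : Differentiable ℂ fun ζ : ℂ => h.traceExp (x + ζ • u) :=
    h.differentiable_sum_eigenvalues (by fun_prop) Complex.differentiable_exp
  have hbound := le_mul_cosh_of_real_on_imaginary_axis (B := B * ‖w‖) (σ := ‖h.eigenvalues w‖)
    (a := 1) (f := fun ζ => h.traceExp (x + ζ • w) + h.traceExp (x + ζ • (-w)))
    (c := h.realTraceExp (x + w) + h.realTraceExp (x - w)) (M := 2 * h.realTraceExp x)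
    (by positivity) (norm_nonneg _) (by positivity) ((hdiff w).add (hdiff (-w))) ?_
    (fun κ hκ => ?_) (h.exists_ofReal_eq_traceExp_add_traceExp_neg hx hw) zero_le_one ?_
  · rwa [mul_one] at hbound
  · refine (isBigO_exp_norm_comp_add_smul hB₀ n.cast_nonneg htrace x w _).add ?_
    simpa using isBigO_exp_norm_comp_add_smul hB₀ n.cast_nonneg htrace x (-w) _
  · simp only [h.traceExp_add_ofReal_smul hx hw, h.traceExp_add_ofReal_smul hx hw.neg]
    exact (Complex.isBigO_ofReal_left.2 (h.realTraceExp_add_smul_isBigO x w hκ)).add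
      (Complex.isBigO_ofReal_left.2 (h.realTraceExp_add_smul_isBigO x (-w) (hneg.trans_lt hκ)))
  · simp only [h.traceExp_add_ofReal_smul hx hw, h.traceExp_add_ofReal_smul hx hw.neg, one_smul,
      sub_eq_add_neg, Complex.ofReal_add]

theorem log_realTraceExp_add_add_log_realTraceExp_sub_le (hn : 0 < n) (hx : IsSelfAdjoint x)
    (hw : IsSelfAdjoint w) :
    Real.log (h.realTraceExp (x + w)) + Real.log (h.realTraceExp (x - w))
      ≤ 2 * Real.log (h.realTraceExp x) + ‖h.eigenvalues w‖ ^ 2 := by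
  have hpos := h.realTraceExp_pos hn
  set σ := ‖h.eigenvalues w‖
  have hsum : h.realTraceExp (x + w) + h.realTraceExp (x - w)
      ≤ 2 * (Real.exp (σ ^ 2 / 2) * h.realTraceExp x) := by
    grw [h.realTraceExp_add_add_realTraceExp_sub_le hn hx hw, Real.cosh_le_exp_half_sq]
    · exact (by ring : _ = _).le
    · exact mul_nonneg zero_le_two (hpos x).le
  have hamgm : h.realTraceExp (x + w) * h.realTraceExp (x - w)
      ≤ (Real.exp (σ ^ 2 / 2) * h.realTraceExp x) ^ 2 := by
    nlinarith [sq_nonneg (h.realTraceExp (x + w) - h.realTraceExp (x - w)), hpos (x + w),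
      hpos (x - w)]
  have hlog := Real.log_le_log (mul_pos (hpos _) (hpos _)) hamgm
  rw [Real.log_mul (hpos _).ne' (hpos _).ne', Real.log_pow,
    Real.log_mul (Real.exp_pos _).ne' (hpos _).ne', Real.log_exp] at hlog
  push_cast at hlog
  linarith

variable {μ : ℝ}

theorem convexOn_smoothedMaxEigenvalue (hn : 0 < n) (hμ : 0 ≤ μ) :
    ConvexOn ℝ {x | IsSelfAdjoint x} (h.smoothedMaxEigenvalue μ) := by
  have hlog := h.convexOn_log_realTraceExp hn
  refine ConvexOn.smul hμ ⟨hlog.1, fun x hx y hy a b ha hb hab => ?_⟩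
  beta_reduce
  rw [smul_add, smul_comm μ⁻¹ a, smul_comm μ⁻¹ b]
  exact hlog.2 ((IsSelfAdjoint.all μ⁻¹).smul hx) ((IsSelfAdjoint.all μ⁻¹).smul hy) ha hb hab

theorem smoothedMaxEigenvalue_add_add_sub_le (hn : 0 < n) (hμ : 0 < μ) (hx : IsSelfAdjoint x)
    (hw : IsSelfAdjoint w) :
    h.smoothedMaxEigenvalue μ (x + w) + h.smoothedMaxEigenvalue μ (x - w)
      ≤ 2 * h.smoothedMaxEigenvalue μ x + μ⁻¹ * ‖h.eigenvalues w‖ ^ 2 := by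
  have hlog := h.log_realTraceExp_add_add_log_realTraceExp_sub_le hn
    ((IsSelfAdjoint.all μ⁻¹).smul hx) ((IsSelfAdjoint.all μ⁻¹).smul hw)
  rw [← Complex.coe_smul μ⁻¹ w, h.norm_eigenvalues_smul, Complex.coe_smul,
    Complex.norm_of_nonneg (inv_pos.2 hμ).le, ← smul_add, ← smul_sub] at hlog
  calc _ = μ * (Real.log (h.realTraceExp (μ⁻¹ • (x + w)))
          + Real.log (h.realTraceExp (μ⁻¹ • (x - w)))) := (mul_add ..).symm
    _ ≤ μ * (2 * Real.log (h.realTraceExp (μ⁻¹ • x)) + (μ⁻¹ * ‖h.eigenvalues w‖) ^ 2) := by gcongr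
    _ = _ := by
      rw [IsSplitForm.smoothedMaxEigenvalue]
      field_simp

variable {V : Type*} [NormedAddCommGroup V]

theorem convexOn_smoothedMaxEigenvalue_comp [Module ℝ V] {ι : V →ₗ[ℝ] E}
    (hι : ∀ x, IsSelfAdjoint (ι x)) (hn : 0 < n) (hμ : 0 ≤ μ) :
    ConvexOn ℝ Set.univ fun x => h.smoothedMaxEigenvalue μ (ι x) :=
  ((h.convexOn_smoothedMaxEigenvalue hn hμ).comp_linearMap ι).subset (fun x _ => hι x) convex_univ

theorem fderiv_smoothedMaxEigenvalue_comp_sub_le [NormedSpace ℝ V] {ι : V →L[ℝ] E}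
    (hι : ∀ x, IsSelfAdjoint (ι x)) (hn : 0 < n) (hμ : 0 < μ) (x y v : V) :
    (fderiv ℝ (fun x => h.smoothedMaxEigenvalue μ (ι x)) x -
      fderiv ℝ (fun x => h.smoothedMaxEigenvalue μ (ι x)) y) v
      ≤ μ⁻¹ * (‖h.eigenvalues (ι (x - y))‖ * ‖h.eigenvalues (ι v)‖) := by
  obtain ⟨B, hB₀, hB⟩ := h.exists_norm_eigenvalues_le
  refine fderiv_sub_fderiv_le_of_secondDifference_le
    (f := fun x => h.smoothedMaxEigenvalue μ (ι x))
    (h.convexOn_smoothedMaxEigenvalue_comp (ι := ι.toLinearMap) hι hn hμ.le)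
    ((h.continuous_smoothedMaxEigenvalue hn μ).comp ι.continuous) (C := B * ‖ι‖)
    (N := fun w => ‖h.eigenvalues (ι w)‖) (fun t w => ?_) (fun _ => norm_nonneg _) (fun w => ?_)
    (inv_pos.2 hμ).le (fun x w => ?_) x y v
  · rw [map_smul, ← Complex.coe_smul, h.norm_eigenvalues_smul, Complex.norm_real, Real.norm_eq_abs]
  · grw [hB, ι.le_opNorm, mul_assoc]
  · simpa only [map_add, map_sub] using
      h.smoothedMaxEigenvalue_add_add_sub_le hn hμ (hι x) (hι w)

theorem inner_gradient_smoothedMaxEigenvalue_comp_sub_le [InnerProductSpace ℝ V] [CompleteSpace V]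
    {ι : V →L[ℝ] E} (hι : ∀ x, IsSelfAdjoint (ι x)) (hn : 0 < n) (hμ : 0 < μ) (x y v : V) :
    ⟪gradient (fun x => h.smoothedMaxEigenvalue μ (ι x)) x -
      gradient (fun x => h.smoothedMaxEigenvalue μ (ι x)) y, v⟫
      ≤ μ⁻¹ * (‖h.eigenvalues (ι (x - y))‖ * ‖h.eigenvalues (ι v)‖) := by
  rw [inner_sub_left, inner_gradient_left, inner_gradient_left, ← sub_apply]
  exact h.fderiv_smoothedMaxEigenvalue_comp_sub_le hι hn hμ x y v

end IsHyperbolicForm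

end HyperbolicForms

/-! ### The seminorm of a cone -/

section Cones

variable {V : Type*} [AddCommGroup V] [Module ℝ V] {K : Set V} {e u v : V}

/-- The gauge of `(K - e) ∩ (e - K)`: for a cone `K` with `e` in its interior this is the seminorm
`‖·‖_∞` of `K`. -/
noncomputable def orderUnitNorm (K : Set V) (e u : V) : ℝ :=
  sInf {t : ℝ | 0 ≤ t ∧ ∃ v, (e + v ∈ K ∧ e - v ∈ K) ∧ u = t • v}

variable [TopologicalSpace V] [IsTopologicalAddGroup V] [ContinuousSMul ℝ V]

theorem exists_eq_smul_of_mem_interior (he : e ∈ interior K) (u : V) :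
    ∃ t : ℝ, 0 ≤ t ∧ ∃ v, (e + v ∈ K ∧ e - v ∈ K) ∧ u = t • v := by
  have hnhds : ∀ᶠ s : ℝ in 𝓝 0, e + s • u ∈ K ∧ e - s • u ∈ K := by
    rw [mem_interior_iff_mem_nhds] at he
    have hadd : ContinuousAt (fun s : ℝ => e + s • u) 0 := by fun_prop
    have hsub : ContinuousAt (fun s : ℝ => e - s • u) 0 := by fun_prop
    exact (hadd.eventually_mem (by simpa using he)).and (hsub.eventually_mem (by simpa using he))
  obtain ⟨s, hs, hspos : 0 < s⟩ :=
    ((hnhds.filter_mono nhdsWithin_le_nhds).and (self_mem_nhdsWithin (s := Set.Ioi 0))).exists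
  exact ⟨s⁻¹, by positivity, s • u, hs, by rw [inv_smul_smul₀ hspos.ne']⟩

theorem le_orderUnitNorm (he : e ∈ interior K) {c : ℝ}
    (hc : ∀ t : ℝ, 0 ≤ t → ∀ v, e + v ∈ K → e - v ∈ K → u = t • v → c ≤ t) :
    c ≤ orderUnitNorm K e u :=
  le_csInf (exists_eq_smul_of_mem_interior he u) fun t ⟨ht, v, ⟨hadd, hsub⟩, hu⟩ =>
    hc t ht v hadd hsub hu

theorem add_smul_mem_interior (hconv : Convex ℝ K) (hcone : ∀ t : ℝ, 0 < t → ∀ x ∈ K, t • x ∈ K)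
    (he : e ∈ interior K) (hv : v ∈ K) {s : ℝ} (hs : 0 < s) : v + s • e ∈ interior K := by
  have hadd {x y : V} (hx : x ∈ K) (hy : y ∈ K) : x + y ∈ K := by
    have hmid := hcone 2 two_pos _
      (hconv hx hy (a := 1 / 2) (b := 1 / 2) (by norm_num) (by norm_num) (by norm_num))
    rwa [← smul_add, smul_smul, mul_one_div_cancel two_ne_zero, one_smul] at hmid
  rw [mem_interior_iff_mem_nhds] at he ⊢
  have hcont : ContinuousAt (fun z : V => s⁻¹ • (z - v)) (v + s • e) := by fun_prop
  filter_upwards [hcont.eventually_mem (by simpa [inv_smul_smul₀ hs.ne'] using he)] with z hz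
  simpa [smul_inv_smul₀ hs.ne'] using hadd hv (hcone s hs _ hz)

theorem neg_one_le_of_sub_smul_notMem_interior (hconv : Convex ℝ K)
    (hcone : ∀ t : ℝ, 0 < t → ∀ x ∈ K, t • x ∈ K) (he : e ∈ interior K) (hv : e + v ∈ K) {a : ℝ}
    (ha : v - a • e ∉ interior K) : -1 ≤ a := by
  contrapose! ha
  have hline : v - a • e = e + v + (-a - 1) • e := by module
  rw [hline]
  exact add_smul_mem_interior hconv hcone he hv (by linarith)

end Cones

namespace IsHyperbolicForm

variable {V : Type*} [AddCommGroup V] [Module ℝ V] [TopologicalSpace V] [IsTopologicalAddGroup V]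
  [ContinuousSMul ℝ V] {K : Set V} {e : V} {n : ℕ} [StarAddMonoid E]
  {p : E → ℂ} {ι : V →ₗ[ℝ] E}

theorem norm_eigenvalues_le_one (h : IsHyperbolicForm p (ι e) n) (hι : ∀ x, IsSelfAdjoint (ι x))
    (hconv : Convex ℝ K) (hcone : ∀ t : ℝ, 0 < t → ∀ x ∈ K, t • x ∈ K) (he : e ∈ interior K)
    (hK : ∀ x ∈ interior K, p (ι x) ≠ 0) {v : V} (hadd : e + v ∈ K) (hsub : e - v ∈ K) :
    ‖h.eigenvalues (ι v)‖ ≤ 1 := by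
  refine (pi_norm_le_iff_of_nonneg zero_le_one).2 fun j => ?_
  have him := h.im_eigenvalues (hι v) j
  have hroot : p (ι (v - (h.eigenvalues (ι v) j).re • e)) = 0 := by
    have hzero := (h.isEigenvalueVector_eigenvalues (ι v)).eq_zero j
    rwa [Complex.ext (z := h.eigenvalues (ι v) j) (Complex.ofReal_re _).symm
      (by rw [him, Complex.ofReal_im]), Complex.coe_smul, ← map_smul, ← map_sub] at hzero
  rw [← Complex.abs_re_eq_norm.2 him, abs_le]
  set a := (h.eigenvalues (ι v) j).re
  refine ⟨neg_one_le_of_sub_smul_notMem_interior hconv hcone he hadd fun hmem => hK _ hmem hroot,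
    neg_le_neg_iff.1 ?_⟩
  refine neg_one_le_of_sub_smul_notMem_interior hconv hcone he (v := -v)
    (by rwa [← sub_eq_add_neg]) fun hmem => hK _ hmem ?_
  have hneg : ι (-v - -a • e) = (-1 : ℂ) • ι (v - a • e) := by
    rw [neg_one_smul, ← map_neg]
    congr 1
    module
  rw [hneg, h.map_smul, hroot, mul_zero]

theorem norm_eigenvalues_le_orderUnitNorm (h : IsHyperbolicForm p (ι e) n)
    (hι : ∀ x, IsSelfAdjoint (ι x)) (hconv : Convex ℝ K)
    (hcone : ∀ t : ℝ, 0 < t → ∀ x ∈ K, t • x ∈ K) (he : e ∈ interior K)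
    (hK : ∀ x ∈ interior K, p (ι x) ≠ 0) (u : V) :
    ‖h.eigenvalues (ι u)‖ ≤ orderUnitNorm K e u := by
  refine le_orderUnitNorm he fun t ht v hadd hsub hu => ?_
  rw [hu, map_smul, ← Complex.coe_smul, h.norm_eigenvalues_smul, Complex.norm_of_nonneg ht]
  exact mul_le_of_le_one_right ht (h.norm_eigenvalues_le_one hι hconv hcone he hK hadd hsub)

end IsHyperbolicForm

/-! ### Homogeneous polynomials on a line -/

section HomogeneousPolynomials

open MvPolynomial

variable {κ R : Type*} [CommRing R] {P : MvPolynomial κ R} {n : ℕ}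

theorem eval_smul_of_isHomogeneous (hP : P.IsHomogeneous n) (a : R) (z : κ → R) :
    eval (a • z) P = a ^ n * eval z P := by
  rw [eval_eq, eval_eq, Finset.mul_sum]
  refine Finset.sum_congr rfl fun k hk => ?_
  simp only [Pi.smul_apply, smul_eq_mul, mul_pow, Finset.prod_mul_distrib,
    Finset.prod_pow_eq_pow_sum, ← hP.degree_eq_sum_deg_support hk]
  ring

theorem coeff_prod_pow_of_natDegree_le {m : ℕ} {f : κ → Polynomial R}
    (hf : ∀ i, (f i).natDegree ≤ m) (s : Finset κ) (k : κ → ℕ) :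
    (∏ i ∈ s, f i ^ k i).coeff ((∑ i ∈ s, k i) * m) = ∏ i ∈ s, (f i).coeff m ^ k i := by
  classical
  have hpow (i : κ) : (f i ^ k i).natDegree ≤ k i * m := Polynomial.natDegree_pow_le_of_le _ (hf i)
  induction s using Finset.induction_on with
  | empty => simp
  | insert i s hi ih =>
    have hprod : (∏ i ∈ s, f i ^ k i).natDegree ≤ (∑ i ∈ s, k i) * m :=
      (Polynomial.natDegree_prod_le _ _).trans
        ((Finset.sum_le_sum fun i _ => hpow i).trans_eq (Finset.sum_mul ..).symm)
    rw [Finset.prod_insert hi, Finset.prod_insert hi, Finset.sum_insert hi, add_mul,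
      Polynomial.coeff_mul_add_eq_of_natDegree_le (hpow i) hprod, ih,
      Polynomial.coeff_pow_of_natDegree_le (hf i)]

theorem coeff_aeval_of_isHomogeneous (hP : P.IsHomogeneous n) {m : ℕ} {f : κ → Polynomial R}
    (hf : ∀ i, (f i).natDegree ≤ m) :
    (aeval f P).coeff (n * m) = eval (fun i => (f i).coeff m) P := by
  rw [aeval_def, eval₂_eq, Polynomial.finsetSum_coeff, eval_eq]
  refine Finset.sum_congr rfl fun k hk => ?_
  rw [← Polynomial.C_eq_algebraMap, Polynomial.coeff_C_mul, hP.degree_eq_sum_deg_support hk,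
    coeff_prod_pow_of_natDegree_le hf]

/-- The univariate polynomial `t ↦ P (z - t e)`, whose roots are the eigenvalues of `z` with respect
to `P` in direction `e`. -/
noncomputable def lineRestriction (P : MvPolynomial κ R) (e z : κ → R) : Polynomial R :=
  aeval (fun i => Polynomial.C (z i) - Polynomial.X * Polynomial.C (e i)) P

theorem eval_lineRestriction (P : MvPolynomial κ R) (e z : κ → R) (t : R) :
    (lineRestriction P e z).eval t = eval (z - t • e) P := by
  rw [lineRestriction, ← Polynomial.coe_aeval_eq_eval, comp_aeval_apply]
  simp [aeval_eq_eval, Pi.sub_def, mul_comm t]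

theorem map_lineRestriction {S : Type*} [CommRing S] (φ : R →+* S) (P : MvPolynomial κ R)
    (e z : κ → R) :
    (lineRestriction P e z).map φ = lineRestriction (map φ P) (φ ∘ e) (φ ∘ z) := by
  rw [lineRestriction, lineRestriction, aeval_def, aeval_def, eval₂_map,
    ← Polynomial.coe_mapRingHom, hom_eval₂]
  congr 1
  · ext; simp
  · ext; simp

theorem natDegree_line_le (a b : R) :
    (Polynomial.C a - Polynomial.X * Polynomial.C b).natDegree ≤ 1 := by
  compute_degree

theorem natDegree_lineRestriction_le (hP : P.IsHomogeneous n) (e z : κ → R) :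
    (lineRestriction P e z).natDegree ≤ n :=
  (aeval_natDegree_le P hP.totalDegree_le _ fun i => natDegree_line_le (z i) (e i)).trans_eq
    (mul_one n)

theorem coeff_lineRestriction (hP : P.IsHomogeneous n) (e z : κ → R) :
    (lineRestriction P e z).coeff n = (-1) ^ n * eval e P := by
  have hcoeff := coeff_aeval_of_isHomogeneous hP fun i => natDegree_line_le (z i) (e i)
  rw [mul_one] at hcoeff
  rw [lineRestriction, hcoeff, ← eval_smul_of_isHomogeneous hP]
  congr 2
  ext i
  simp [Polynomial.coeff_C]

theorem coeff_lineRestriction_ne_zero (hP : P.IsHomogeneous n) {e : κ → R} (he : eval e P ≠ 0)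
    (z : κ → R) : (lineRestriction P e z).coeff n ≠ 0 := by
  rw [coeff_lineRestriction hP]
  exact (isUnit_neg_one.pow n).mul_right_eq_zero.not.2 he

theorem natDegree_lineRestriction (hP : P.IsHomogeneous n) {e : κ → R} (he : eval e P ≠ 0)
    (z : κ → R) : (lineRestriction P e z).natDegree = n :=
  (natDegree_lineRestriction_le hP e z).antisymm
    (Polynomial.le_natDegree_of_ne_zero (coeff_lineRestriction_ne_zero hP he z))

theorem lineRestriction_ne_zero (hP : P.IsHomogeneous n) {e : κ → R} (he : eval e P ≠ 0)
    (z : κ → R) : lineRestriction P e z ≠ 0 := fun hzero =>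
  coeff_lineRestriction_ne_zero hP he z (by rw [hzero, Polynomial.coeff_zero])

end HomogeneousPolynomials

section ComplexRoots

theorem exists_map_univ_eq_of_card_eq {α : Type*} {n : ℕ} {s : Multiset α} (hs : s.card = n) :
    ∃ v : Fin n → α, Finset.univ.val.map v = s := by
  obtain ⟨l, rfl⟩ : ∃ l : List α, ↑l = s := ⟨s.toList, s.coe_toList⟩
  obtain rfl : l.length = n := hs
  exact ⟨l.get, by rw [Fin.univ_val_map, List.ofFn_get]⟩

variable {κ : Type*} [Fintype κ] {n : ℕ}

theorem isEigenvalueVector_of_map_eq_roots {P : MvPolynomial κ ℂ} (hP : P.IsHomogeneous n)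
    {e z : κ → ℂ} (he : MvPolynomial.eval e P ≠ 0) {v : Fin n → ℂ}
    (hv : Finset.univ.val.map v = (lineRestriction P e z).roots) :
    IsEigenvalueVector (fun z => MvPolynomial.eval z P) e z v := fun t => by
  have hprod := (IsAlgClosed.splits (lineRestriction P e z)).eval_eq_prod_roots t
  rw [← hv, Polynomial.leadingCoeff, natDegree_lineRestriction hP he, coeff_lineRestriction hP,
    eval_lineRestriction, Multiset.map_map] at hprod
  simp only [hprod, ← neg_sub t, Finset.prod_neg]
  rw [Finset.card_univ, Fintype.card_fin, mul_left_comm, mul_assoc]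
  rfl

theorem isSplitForm_eval {P : MvPolynomial κ ℂ} (hP : P.IsHomogeneous n) {e : κ → ℂ}
    (he : MvPolynomial.eval e P ≠ 0) : IsSplitForm (fun z => MvPolynomial.eval z P) e n where
  map_smul := eval_smul_of_isHomogeneous hP
  differentiable := by
    simp only [MvPolynomial.eval_eq']
    fun_prop
  ne_zero := he
  exists_eigenvalues z := by
    have hcard : (lineRestriction P e z).roots.card = n := by
      rw [← (IsAlgClosed.splits _).natDegree_eq_card_roots, natDegree_lineRestriction hP he]
    obtain ⟨v, hv⟩ := exists_map_univ_eq_of_card_eq hcard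
    exact ⟨v, isEigenvalueVector_of_map_eq_roots hP he hv⟩

end ComplexRoots

section RealRoots

variable {κ : Type*} {P : MvPolynomial κ ℝ} {n : ℕ} {e x : κ → ℝ}

theorem splits_lineRestriction (hP : P.IsHomogeneous n) (he : MvPolynomial.eval e P ≠ 0)
    (hroots : (lineRestriction P e x).roots.card = n) : (lineRestriction P e x).Splits := by
  rw [Polynomial.splits_iff_card_roots, hroots, natDegree_lineRestriction hP he]

theorem eval_ofReal_comp (P : MvPolynomial κ ℝ) (x : κ → ℝ) :
    MvPolynomial.eval (Complex.ofReal ∘ x) (P.map Complex.ofRealHom) = MvPolynomial.eval x P := by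
  rw [MvPolynomial.eval_map]
  exact (MvPolynomial.eval₂_comp_left Complex.ofRealHom (RingHom.id ℝ) x P).symm

theorem eval_ofReal_comp_ne_zero (he : MvPolynomial.eval e P ≠ 0) :
    MvPolynomial.eval (Complex.ofReal ∘ e) (P.map Complex.ofRealHom) ≠ 0 := by
  rwa [eval_ofReal_comp, Complex.ofReal_ne_zero]

theorem eval_star_map_ofReal (P : MvPolynomial κ ℝ) (z : κ → ℂ) :
    MvPolynomial.eval (star z) (P.map Complex.ofRealHom)
      = star (MvPolynomial.eval z (P.map Complex.ofRealHom)) := by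
  rw [MvPolynomial.eval_map, MvPolynomial.eval_map,
    ← starRingEnd_apply (MvPolynomial.eval₂ _ z P), MvPolynomial.hom_eval₂]
  congr 1
  ext
  simp

theorem roots_lineRestriction_map_ofReal (hP : P.IsHomogeneous n)
    (he : MvPolynomial.eval e P ≠ 0) (hroots : (lineRestriction P e x).roots.card = n) :
    (lineRestriction (P.map Complex.ofRealHom) (Complex.ofReal ∘ e) (Complex.ofReal ∘ x)).roots
      = (lineRestriction P e x).roots.map Complex.ofReal := by
  exact (congrArg Polynomial.roots (map_lineRestriction Complex.ofRealHom P e x)).symm.trans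
    ((splits_lineRestriction hP he hroots).roots_map Complex.ofRealHom)

variable [Fintype κ]

theorem isHyperbolicForm_eval_map_ofReal (hP : P.IsHomogeneous n)
    (he : MvPolynomial.eval e P ≠ 0) (hroots : ∀ x, (lineRestriction P e x).roots.card = n) :
    IsHyperbolicForm (fun z => MvPolynomial.eval z (P.map Complex.ofRealHom))
      (Complex.ofReal ∘ e) n where
  toIsSplitForm := isSplitForm_eval (hP.map _) (eval_ofReal_comp_ne_zero he)
  map_star := eval_star_map_ofReal P
  isSelfAdjoint := funext fun i => Complex.conj_ofReal (e i)
  im_eq_zero z hz t ht := by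
    obtain ⟨x, rfl⟩ : ∃ x : κ → ℝ, Complex.ofReal ∘ x = z :=
      ⟨fun i => (z i).re, funext fun i => Complex.conj_eq_iff_re.1 (congrFun hz i)⟩
    have hmem : t ∈ (lineRestriction (P.map Complex.ofRealHom) (Complex.ofReal ∘ e)
        (Complex.ofReal ∘ x)).roots :=
      (Polynomial.mem_roots (lineRestriction_ne_zero (hP.map _) (eval_ofReal_comp_ne_zero he) _)).2
        (by rwa [Polynomial.IsRoot, eval_lineRestriction])
    rw [roots_lineRestriction_map_ofReal hP he (hroots x)] at hmem
    obtain ⟨s, -, rfl⟩ := Multiset.mem_map.1 hmem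
    exact Complex.ofReal_im s

theorem sum_eigenvalues_eq_sum_map_roots (hP : P.IsHomogeneous n) (he : MvPolynomial.eval e P ≠ 0)
    (h : IsSplitForm (fun z => MvPolynomial.eval z (P.map Complex.ofRealHom))
      (Complex.ofReal ∘ e) n)
    (hroots : (lineRestriction P e x).roots.card = n) (φ : ℂ → ℝ) :
    ∑ j, φ (h.eigenvalues (Complex.ofReal ∘ x) j)
      = ((lineRestriction P e x).roots.map fun t => φ (t : ℝ)).sum := by
  obtain ⟨v, hv⟩ := exists_map_univ_eq_of_card_eq hroots
  have hev := isEigenvalueVector_of_map_eq_roots (v := Complex.ofReal ∘ v) (hP.map _)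
    (eval_ofReal_comp_ne_zero he)
    (by rw [roots_lineRestriction_map_ofReal hP he hroots, ← hv, Multiset.map_map])
  rw [h.sum_eigenvalues_eq φ hev, ← hv, Multiset.map_map]
  rfl

end RealRoots

/-! ### The smoothed largest eigenvalue on a real space -/

/-- The inclusion of `ℝ^κ` in `ℂ^κ`, whose image consists of the self-adjoint vectors. -/
noncomputable def complexify (κ : Type*) : EuclideanSpace ℝ κ →L[ℝ] κ → ℂ :=
  ContinuousLinearMap.pi fun i => Complex.ofRealCLM ∘L EuclideanSpace.proj i

theorem isSelfAdjoint_complexify {κ : Type*} (x : EuclideanSpace ℝ κ) :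
    IsSelfAdjoint (complexify κ x) :=
  funext fun i => Complex.conj_ofReal (x i)

theorem smoothing_convex_lipschitz_gradient_general {κ : Type*} [Fintype κ] {n : ℕ} (hn : 0 < n)
    (K : Set (EuclideanSpace ℝ κ)) (hKconv : Convex ℝ K)
    (hKcone : ∀ t : ℝ, 0 < t → ∀ x ∈ K, t • x ∈ K)
    (P : MvPolynomial κ ℝ) (hP : P.IsHomogeneous n)
    (e : EuclideanSpace ℝ κ) (he : e ∈ interior K)
    (hinterior : ∀ x ∈ interior K, MvPolynomial.eval (fun i => x i) P ≠ 0)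
    (q : EuclideanSpace ℝ κ → Polynomial ℝ)
    (hq : ∀ x t, (q x).eval t = MvPolynomial.eval (fun i => x i - t * e i) P)
    (hroots : ∀ x, Multiset.card (q x).roots = n)
    (nInf : EuclideanSpace ℝ κ → ℝ)
    (hnInf : ∀ u, nInf u =
      sInf {t : ℝ | 0 ≤ t ∧ ∃ v, (e + v ∈ K ∧ e - v ∈ K) ∧ u = t • v}) :
    ∀ μ : ℝ, 0 < μ →
      ConvexOn ℝ Set.univ
        (fun x => μ * Real.log (((q x).roots.map (fun lam => Real.exp (lam / μ))).sum)) ∧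
      ∀ x y v, nInf v ≤ 1 →
        ⟪gradient (fun x =>
            μ * Real.log (((q x).roots.map (fun lam => Real.exp (lam / μ))).sum)) x -
          gradient (fun x =>
            μ * Real.log (((q x).roots.map (fun lam => Real.exp (lam / μ))).sum)) y,
          v⟫ ≤ μ⁻¹ * nInf (x - y) := by
  intro μ hμ
  obtain rfl : nInf = orderUnitNorm K e := funext hnInf
  obtain rfl : q = fun x : EuclideanSpace ℝ κ => lineRestriction P e.ofLp x.ofLp :=
    funext fun x => Polynomial.funext fun t =>
      (hq x t).trans (eval_lineRestriction P e.ofLp x.ofLp t).symm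
  have hPe := hinterior e he
  have h := isHyperbolicForm_eval_map_ofReal hP hPe fun x => hroots (WithLp.toLp 2 x)
  have hsmoothed : (fun x : EuclideanSpace ℝ κ => μ * Real.log
      (((lineRestriction P e.ofLp x.ofLp).roots.map fun lam => Real.exp (lam / μ)).sum))
      = fun x => h.smoothedMaxEigenvalue μ (complexify κ x) := funext fun x => by
    rw [h.smoothedMaxEigenvalue_eq]
    exact congrArg (μ * Real.log ·) (sum_eigenvalues_eq_sum_map_roots hP hPe h.toIsSplitForm
      (hroots x) fun t => Real.exp (t.re / μ)).symm
  have hnorm := h.norm_eigenvalues_le_orderUnitNorm (ι := (complexify κ).toLinearMap)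
    isSelfAdjoint_complexify hKconv hKcone he fun x hx => eval_ofReal_comp_ne_zero (hinterior x hx)
  simp only [hsmoothed]
  refine ⟨h.convexOn_smoothedMaxEigenvalue_comp (ι := (complexify κ).toLinearMap)
    isSelfAdjoint_complexify hn hμ.le, fun x y v hv => ?_⟩
  grw [h.inner_gradient_smoothedMaxEigenvalue_comp_sub_le isSelfAdjoint_complexify hn hμ x y v]
  refine mul_le_mul_of_nonneg_left ?_ (inv_pos.2 hμ).le
  exact (mul_le_of_le_one_right (norm_nonneg _) ((hnorm v).trans hv)).trans (hnorm (x - y))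

/-- Proposition 3.1: `f_μ` is convex and its gradient is `(1/μ)`-Lipschitz from the
seminorm `‖·‖_∞` to its dual: for all `x, y` and every `v` with `‖v‖_∞ ≤ 1`,
`⟪∇f_μ(x) − ∇f_μ(y), v⟫ ≤ (1/μ)‖x − y‖_∞`. -/
theorem smoothing_convex_lipschitz_gradient
    {d n : ℕ} (hn : 0 < n)
    (K : Set (EuclideanSpace ℝ (Fin d)))
    (hKclosed : IsClosed K) (hKconv : Convex ℝ K)
    (hKcone : ∀ t : ℝ, 0 < t → ∀ x ∈ K, t • x ∈ K)
    (P : MvPolynomial (Fin d) ℝ) (hP : P.IsHomogeneous n)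
    (e : EuclideanSpace ℝ (Fin d)) (he : e ∈ interior K)
    (hcomp : interior K =
      connectedComponentIn {x | MvPolynomial.eval (fun i => x i) P ≠ 0} e)
    (q : EuclideanSpace ℝ (Fin d) → Polynomial ℝ)
    (hq : ∀ x t, (q x).eval t = MvPolynomial.eval (fun i => x i - t * e i) P)
    (hroots : ∀ x, Multiset.card (q x).roots = n)
    (nInf : EuclideanSpace ℝ (Fin d) → ℝ)
    (hnInf : ∀ u, nInf u =
      sInf {t : ℝ | 0 ≤ t ∧ ∃ v, (e + v ∈ K ∧ e - v ∈ K) ∧ u = t • v}) :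
    ∀ μ : ℝ, 0 < μ →
      ConvexOn ℝ Set.univ
        (fun x => μ * Real.log (((q x).roots.map (fun lam => Real.exp (lam / μ))).sum)) ∧
      ∀ x y v, nInf v ≤ 1 →
        ⟪gradient (fun x =>
            μ * Real.log (((q x).roots.map (fun lam => Real.exp (lam / μ))).sum)) x -
          gradient (fun x =>
            μ * Real.log (((q x).roots.map (fun lam => Real.exp (lam / μ))).sum)) y,
          v⟫ ≤ μ⁻¹ * nInf (x - y) :=
  smoothing_convex_lipschitz_gradient_general hn K hKconv hKcone P hP e he
    (fun _ hx => connectedComponentIn_subset _ _ (hcomp ▸ hx)) q hq hroots nInf hnInf
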